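/- Let β ∈ 𝒫_{n,e} with c_{β,p} dividing j, and let V'_{β,1} be the G-submodule of V^{⊗n} generated by a highest weight vector in Z_{β,1} (so V'_{β,1} ≅ V_β, the irreducible G-module of highest weight β, stable under τ^j). Then Tr(Dτ^j, V'_{β,1}) = s_{β{j}}(𝒳_j), the Schur function associated to the j₁d-partition β{j} = (β^{(0)},…,β^{(j₁d−1)}) in the variables 𝒳_j. -/

import Mathlib

/-!
Common framework for formalizing T. Shoji, "Green functions associated to
complex reflection groups, II" (arXiv:math/0105053).

We model:
* `e`-partitions of `n` as functions `ZMod e → Multiset ℕ`;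
* the complex reflection group `W̃ = G(e,1,n)` as the semidirect product
  `(Fin n → Multiplicative (ZMod e)) ⋊ Equiv.Perm (Fin n)`, and
  `W = G(e,p,n)` as the kernel of the mod-`p` sum character;
* the tensor space `V^{⊗n}` concretely via matrices indexed by
  `Fin n → (Σ k : ZMod e, Fin (m k))`;
* symmetric functions in the (finitely many, `m k ≥ n`) variables
  `x_i^{(k)}` in evaluated form, i.e. as functions of an assignment
  `xv : (Σ k : ZMod e, Fin (m k)) → ℂ`.
-/

open scoped BigOperators

attribute [local instance] Classical.propDecidable

namespace GreenII

/-! ## Combinatorics of e-partitions -/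

/-- An `e`-partition of `n`: a tuple of partitions (multisets of positive
integers) indexed by `ZMod e`, with total size `n`. -/
def IsEPartition (e : ℕ) [NeZero e] (n : ℕ) (α : ZMod e → Multiset ℕ) : Prop :=
  (∀ k, ∀ x ∈ α k, 0 < x) ∧ (∑ k : ZMod e, (α k).sum) = n

/-- The shift operator `θ = θ_p`, `θ(α)^{(k)} = α^{(k-d)}`. -/
def theta (e : ℕ) [NeZero e] (d : ℕ) (α : ZMod e → Multiset ℕ) : ZMod e → Multiset ℕ :=
  fun k => α (k - (d : ZMod e))

/-- `c_{α,p}`: the size of the `θ`-orbit of `α`. -/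
noncomputable def csize (e : ℕ) [NeZero e] (d : ℕ) (α : ZMod e → Multiset ℕ) : ℕ :=
  Function.minimalPeriod (theta e d) α

/-- `Δ(α) = ∑_k k · l(α^{(k)})`. -/
def Delta (e : ℕ) [NeZero e] (α : ZMod e → Multiset ℕ) : ℕ :=
  ∑ k : ZMod e, k.val * (α k).card

/-- `l(α) = ∑_k l(α^{(k)})`, the total number of parts. -/
def lenE (e : ℕ) [NeZero e] (α : ZMod e → Multiset ℕ) : ℕ :=
  ∑ k : ZMod e, (α k).card

/-- `α` and `β` lie in the same `θ`-orbit. -/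
def SameOrbit (e : ℕ) [NeZero e] (d : ℕ) (α β : ZMod e → Multiset ℕ) : Prop :=
  ∃ i, (theta e d)^[i] α = β

/-! ## The groups `W̃ = G(e,1,n)` and `W = G(e,p,n)` -/

/-- The "diagonal" part of `G(e,1,n)`. -/
abbrev NC (e n : ℕ) := Fin n → Multiplicative (ZMod e)

/-- The permutation action of `𝔖_n` on the diagonal part. -/
def permAut (e n : ℕ) (x : Equiv.Perm (Fin n)) : NC e n ≃* NC e n where
  toFun f := f ∘ ⇑x.symm
  invFun f := f ∘ ⇑x
  left_inv f := by funext i; simp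
  right_inv f := by funext i; simp
  map_mul' f g := rfl

def permHom (e n : ℕ) : Equiv.Perm (Fin n) →* MulAut (NC e n) where
  toFun x := permAut e n x
  map_one' := rfl
  map_mul' x y := rfl

/-- `W̃ = G(e,1,n) ≅ (ℤ/eℤ)^n ⋊ 𝔖_n`, with `w = x(a_1,…,a_n)` recorded as
`⟨(a_i), x⟩`. -/
abbrev Wt (e n : ℕ) := NC e n ⋊[permHom e n] Equiv.Perm (Fin n)

noncomputable instance WtFintype (e n : ℕ) [NeZero e] : Fintype (Wt e n) :=
  Fintype.ofEquiv (NC e n × Equiv.Perm (Fin n))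
    { toFun := fun x => ⟨x.1, x.2⟩
      invFun := fun x => (x.left, x.right)
      left_inv := fun _ => rfl
      right_inv := fun _ => rfl }

/-- The character `w ↦ ∑ a_i mod p` of `W̃`. -/
noncomputable def wsumHom (e p n : ℕ) (hp : p ∣ e) : Wt e n →* Multiplicative (ZMod p) where
  toFun w := Multiplicative.ofAdd (∑ i, ZMod.castHom hp (ZMod p) (w.left i).toAdd)
  map_one' := by simp
  map_mul' w w' := by
    have h : ∀ i, ((w * w').left i).toAdd
        = (w.left i).toAdd + (w'.left (w.right.symm i)).toAdd := fun _ => rfl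
    simp only [h, map_add, Finset.sum_add_distrib, ofAdd_add]
    congr 2
    exact Equiv.sum_comp w.right.symm
      (fun i => ZMod.castHom hp (ZMod p) ((w'.left i).toAdd))

/-- `W = G(e,p,n)`: the subgroup of `W̃` on which `∑ a_i ≡ 0 (mod p)`. -/
noncomputable def Wgrp (e p n : ℕ) (hp : p ∣ e) : Subgroup (Wt e n) :=
  (wsumHom e p n hp).ker

/-- `σ = t_1 ∈ W̃`. -/
def sigmaElt (e n : ℕ) [NeZero n] : Wt e n :=
  SemidirectProduct.inl (fun i => Multiplicative.ofAdd (if i = (0 : Fin n) then (1 : ZMod e) else 0))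

/-- membership in the coset `σ^q W`. -/
def inCoset (e p n : ℕ) [NeZero n] (hp : p ∣ e) (q : ℕ) (w : Wt e n) : Prop :=
  ∃ u ∈ Wgrp e p n hp, w = (sigmaElt e n) ^ q * u

/-- conjugacy under `W`. -/
def IsConjW (e p n : ℕ) (hp : p ∣ e) (w w' : Wt e n) : Prop :=
  ∃ u ∈ Wgrp e p n hp, u * w * u⁻¹ = w'

/-- The `e`-partition recording the conjugacy class of `w ∈ W̃`:
a `k`-cycle of length `l` (a cycle of the underlying permutation whose
accumulated `ZMod e`-color is `k`, fixed points counting as `1`-cycles)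
contributes a part `l` to the `k`-th component. -/
noncomputable def classOf (e n : ℕ) [NeZero e] (w : Wt e n) : ZMod e → Multiset ℕ := fun k =>
  ((w.right.cycleFactorsFinset.val.filter
      (fun c => (∑ i ∈ c.support, (w.left i).toAdd) = k)).map fun c => c.support.card)
    + Multiset.replicate
        ((Finset.univ.filter fun i : Fin n => w.right i = i ∧ (w.left i).toAdd = k).card) 1

/-! ### The standard class representative `w_α(b)` -/

/-- The list of (part, color) pairs of an `e`-partition. -/
noncomputable def partsList (e : ℕ) [NeZero e] (α : ZMod e → Multiset ℕ) : List (ℕ × ZMod e) :=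
  (Finset.univ : Finset (ZMod e)).toList.flatMap fun k => (α k).toList.map fun r => (r, k)

/-- the color datum of `w_α(b)`: each cycle carries its color at its first
point, except the first (exceptional) cycle, which carries `k - b` at its
first point and `b` at its last point. -/
noncomputable def aexc (e : ℕ) [NeZero e] (L : List (ℕ × ZMod e)) (b : ZMod e) :
    (Σ i : Fin L.length, Fin (L.get i).1) → ZMod e := fun x =>
  if (x.1 : ℕ) = 0 then
    (if (x.2 : ℕ) = 0 then (L.get x.1).2 - b else 0)
      + (if (x.2 : ℕ) = (L.get x.1).1 - 1 then b else 0)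
  else if (x.2 : ℕ) = 0 then (L.get x.1).2 else 0

/-- The standard representative `w_α(b) ∈ W̃` of the paper, 2.6: a product of
disjoint cycles matching `α`, of the form `t_{i_1}^k z` except for one
exceptional cycle `t_{i_1}^{k-b} t_{i_m}^{b} z`. -/
noncomputable def wrep (e n : ℕ) [NeZero e] (α : ZMod e → Multiset ℕ) (b : ZMod e) : Wt e n :=
  if hcard : Fintype.card (Σ i : Fin (partsList e α).length, Fin ((partsList e α).get i).1) = n then
    let φ := Fintype.equivFinOfCardEq hcard
    ⟨fun t => Multiplicative.ofAdd (aexc e (partsList e α) b (φ.symm t)),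
      φ.symm.trans ((Equiv.sigmaCongrRight fun _ => finRotate _).trans φ)⟩
  else 1

/-! ## The tensor space `V^{⊗n}` -/

/-- Basis index of `V = ⊕_k V_k`, `dim V_k = m k`. -/
abbrev BIdx (e : ℕ) [NeZero e] (m : ZMod e → ℕ) := Σ k : ZMod e, Fin (m k)

/-- Basis index of `V^{⊗n}`. -/
abbrev TIdx (e n : ℕ) [NeZero e] (m : ZMod e → ℕ) := Fin n → BIdx e m

/-- `ζ` raised to a `ZMod e` exponent. -/
noncomputable def zmpow (e : ℕ) [NeZero e] (ζ : ℂ) (c : ZMod e) : ℂ := ζ ^ c.val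

/-- the matrix of `w ∈ W̃` on `V^{⊗n}` (𝔖_n permutes the factors, and
`t_k` multiplies by `ζ^j` if the `k`-th factor lies in `V_j`). -/
noncomputable def rhoMat (e n : ℕ) [NeZero e] (ζ : ℂ) (m : ZMod e → ℕ) (w : Wt e n) :
    Matrix (TIdx e n m) (TIdx e n m) ℂ := fun b' b =>
  if b' = b ∘ ⇑w.right.symm then ∏ s, ζ ^ (((w.left s).toAdd.val) * (b' s).1.val) else 0

/-- The operator `D` (multiplication by `x_{i_1} ⋯ x_{i_n}`), with the
variables evaluated via `xv`. -/
noncomputable def Dmat (e n : ℕ) [NeZero e] (m : ZMod e → ℕ) (xv : BIdx e m → ℂ) :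
    Matrix (TIdx e n m) (TIdx e n m) ℂ :=
  Matrix.diagonal fun b => ∏ s, xv (b s)

/-- `τ` on the basis of `V`: `v_j^{(k)} ↦ v_j^{(k+d)}` (uses `m (k+d) = m k`). -/
def tauB (e : ℕ) [NeZero e] (d : ℕ) (m : ZMod e → ℕ) (hm : ∀ k, m (k + (d : ZMod e)) = m k) :
    BIdx e m → BIdx e m := fun b => ⟨b.1 + (d : ZMod e), Fin.cast (hm b.1).symm b.2⟩

/-- `g ↦ g^{⊗ n}`: the matrix of `g ∈ End V` acting diagonally on `V^{⊗n}`. -/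
noncomputable def tensorPow (e n : ℕ) [NeZero e] (m : ZMod e → ℕ)
    (g : Matrix (BIdx e m) (BIdx e m) ℂ) : Matrix (TIdx e n m) (TIdx e n m) ℂ :=
  Matrix.of fun b' b => ∏ s, g (b' s) (b s)

/-- the matrix of `τ` on `V`. -/
noncomputable def tauV (e : ℕ) [NeZero e] (d : ℕ) (m : ZMod e → ℕ)
    (hm : ∀ k, m (k + (d : ZMod e)) = m k) : Matrix (BIdx e m) (BIdx e m) ℂ :=
  fun b' b => if b' = tauB e d m hm b then 1 else 0

/-- the matrix of `τ` on `V^{⊗n}`. -/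
noncomputable def tauMat (e n : ℕ) [NeZero e] (d : ℕ) (m : ZMod e → ℕ)
    (hm : ∀ k, m (k + (d : ZMod e)) = m k) : Matrix (TIdx e n m) (TIdx e n m) ℂ :=
  tensorPow e n m (tauV e d m hm)

/-- a member of `G = GL_{m_0} × ⋯ × GL_{m_{e-1}}` (as an endomorphism of V,
invertibility stated separately). -/
def IsBlockDiag (e : ℕ) [NeZero e] (m : ZMod e → ℕ) (g : Matrix (BIdx e m) (BIdx e m) ℂ) : Prop :=
  ∀ b b' : BIdx e m, b.1 ≠ b'.1 → g b b' = 0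

/-- a block upper unitriangular matrix (product of root subgroups for the
positive roots of `G`). -/
def IsUpperUni (e : ℕ) [NeZero e] (m : ZMod e → ℕ) (g : Matrix (BIdx e m) (BIdx e m) ℂ) : Prop :=
  (∀ b, g b b = 1) ∧
    ∀ b b' : BIdx e m, b ≠ b' → ¬(b.1 = b'.1 ∧ b.2.val < b'.2.val) → g b b' = 0

/-! ## Symmetric functions (evaluated form) -/

/-- value of the variable `x_i^{(k)}` under the assignment `xv` (junk `0` out
of range). -/
noncomputable def xval (e : ℕ) [NeZero e] (m : ZMod e → ℕ) (xv : BIdx e m → ℂ)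
    (k : ZMod e) (i : ℕ) : ℂ :=
  if h : i < m k then xv ⟨k, ⟨i, h⟩⟩ else 0

/-- `h_j`: the order of the image of `j` in `ℤ/pℤ`. -/
noncomputable def hOrd (p j : ℕ) : ℕ := addOrderOf ((j : ZMod p))

/-- `j₁ d` where `j₁ = p / h_j`: the number of components of the variable
system `𝒳_j`. -/
noncomputable def Esys (p d j : ℕ) : ℕ := (p / hOrd p j) * d

/-- the variable `X_i^{(k)} = x_i^{(k)} x_i^{(k+jd)} ⋯ x_i^{(k+(h_j-1)jd)}`
of the system `𝒳_j`. -/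
noncomputable def Xvar (e : ℕ) [NeZero e] (p d : ℕ) (m : ZMod e → ℕ) (xv : BIdx e m → ℂ)
    (j k i : ℕ) : ℂ :=
  ∏ s ∈ Finset.range (hOrd p j), xval e m xv (((k + s * j * d : ℕ) : ZMod e)) i

/-- number of variables in the `k`-th component of any of the systems `𝒳_j`. -/
noncomputable def mmX (e : ℕ) [NeZero e] (m : ZMod e → ℕ) : ℕ → ℕ := fun k => m ((k : ℕ) : ZMod e)

/-- The variables of the system `𝒳_j`, as a doubly indexed family. -/
noncomputable def vvX (e : ℕ) [NeZero e] (p d : ℕ) (m : ZMod e → ℕ) (xv : BIdx e m → ℂ)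
    (j : ℕ) : ℕ → ℕ → ℂ := fun k i => Xvar e p d m xv j k i

/-- complete homogeneous symmetric polynomial `h_r` in `N` variables. -/
noncomputable def hcomp (N r : ℕ) (v : ℕ → ℂ) : ℂ :=
  ∑ c ∈ Finset.Nat.antidiagonalTuple N r, ∏ i : Fin N, v i ^ c i

/-- the parts of a partition in decreasing order (`0` beyond the length). -/
noncomputable def lamOf (μ : Multiset ℕ) (i : ℕ) : ℕ := ((μ.sort (· ≤ ·)).reverse).getD i 0

/-- Schur polynomial in `N` variables (Jacobi–Trudi). -/
noncomputable def schurFin (N : ℕ) (μ : Multiset ℕ) (v : ℕ → ℂ) : ℂ :=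
  Matrix.det (Matrix.of fun i j : Fin N =>
    if h : (0 : ℤ) ≤ (lamOf μ i + j : ℤ) - i then hcomp N ((lamOf μ i + j : ℤ) - i).toNat v
    else 0)

/-- monomial symmetric polynomial in `N` variables. -/
noncomputable def monoFin (N : ℕ) (μ : Multiset ℕ) (v : ℕ → ℂ) : ℂ :=
  ∑ c ∈ (Finset.Nat.antidiagonalTuple N μ.sum).filter
      (fun c => ((List.ofFn c : List ℕ) : Multiset ℕ).filter (fun x => 0 < x) = μ),
    ∏ i : Fin N, v i ^ c i

/-! ### generic families for a variable system with `E` components -/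

/-- `p_r^{(i)} = ∑_{k<E} u^{ik} p_r(x^{(k)})` (formula (2.2.2)/(2.4.2), with
`u` a primitive `E`-th root of unity), for the system of variables
`vv k i` (`k < E`, `i < mm k`); `p_0^{(i)} = 1`. -/
noncomputable def pGenSys (u : ℂ) (E : ℕ) (mm : ℕ → ℕ) (vv : ℕ → ℕ → ℂ) (i r : ℕ) : ℂ :=
  if r = 0 then 1 else ∑ k ∈ Finset.range E, u ^ (i * k) * ∑ s ∈ Finset.range (mm k), vv k s ^ r

/-- the power sum `p_γ` of an `E`-tuple of partitions (2.2.1). -/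
noncomputable def pAlphaSys (u : ℂ) (E : ℕ) (mm : ℕ → ℕ) (vv : ℕ → ℕ → ℂ)
    (γ : ℕ → Multiset ℕ) : ℂ :=
  ∏ k ∈ Finset.range E, ((γ k).map fun r => pGenSys u E mm vv k r).prod

/-- the Schur function `s_γ` of an `E`-tuple of partitions. -/
noncomputable def sAlphaSys (E : ℕ) (mm : ℕ → ℕ) (vv : ℕ → ℕ → ℂ) (γ : ℕ → Multiset ℕ) : ℂ :=
  ∏ k ∈ Finset.range E, schurFin (mm k) (γ k) (vv k)

/-- the monomial symmetric function `m_γ` of an `E`-tuple of partitions. -/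
noncomputable def mAlphaSys (E : ℕ) (mm : ℕ → ℕ) (vv : ℕ → ℕ → ℂ) (γ : ℕ → Multiset ℕ) : ℂ :=
  ∏ k ∈ Finset.range E, monoFin (mm k) (γ k) (vv k)

/-- the function `q_{r,±}^{(k)}(x;t)` of [S], (3.1.1). -/
noncomputable def qGenSys (t : ℂ) (E : ℕ) (mm : ℕ → ℕ) (vv : ℕ → ℕ → ℂ)
    (sgn : Bool) (k r : ℕ) : ℂ :=
  if r = 0 then 1 else
    let k' := if sgn then (k + 1) % E else (k + E - 1) % E
    ∑ i ∈ Finset.range (mm k),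
      vv k i ^ ((r : ℤ) + (mm k : ℤ) - 1 - (mm k' : ℤ)) *
        (∏ jj ∈ Finset.range (mm k'), (vv k i - t * vv k' jj)) /
        ∏ jj ∈ (Finset.range (mm k)).erase i, (vv k i - vv k jj)

/-- the function `q_{γ,±}(x;t)` of [S], (3.1.2). -/
noncomputable def qAlphaSys (t : ℂ) (E : ℕ) (mm : ℕ → ℕ) (vv : ℕ → ℕ → ℂ)
    (sgn : Bool) (γ : ℕ → Multiset ℕ) : ℂ :=
  ∏ k ∈ Finset.range E, ((γ k).map fun r => qGenSys t E mm vv sgn k r).prod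

/-- `z_β = ∏ i^{n_i} n_i!` for a partition `β = (1^{n_1} 2^{n_2} ⋯)`. -/
noncomputable def zPart (μ : Multiset ℕ) : ℂ :=
  ∏ i ∈ μ.toFinset, (i : ℂ) ^ (μ.count i) * (Nat.factorial (μ.count i) : ℂ)

/-- `z_γ(t) = z_γ ∏_{k,j} (1 - u^k t^{γ_j^{(k)}})⁻¹` for an `E`-tuple of
partitions `γ` (`u` the `E`-th root of unity), cf. (3.1.3). -/
noncomputable def zClassSys (u t : ℂ) (E : ℕ) (γ : ℕ → Multiset ℕ) : ℂ :=
  ((E : ℂ) ^ (∑ k ∈ Finset.range E, (γ k).card)) * (∏ k ∈ Finset.range E, zPart (γ k)) *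
    (∏ k ∈ Finset.range E, ((γ k).map fun r => (1 - u ^ k * t ^ r)).prod)⁻¹

/-! ### the `j`-th pieces attached to an e-partition -/

/-- the truncation `α{j} = (α^{(0)},…,α^{(j₁d-1)})` (used when `c_{α,p} ∣ j`). -/
noncomputable def braceF (e : ℕ) [NeZero e] (p d : ℕ) (j : ℕ) (α : ZMod e → Multiset ℕ) :
    ℕ → Multiset ℕ :=
  fun k => if k < Esys p d j then α ((k : ℕ) : ZMod e) else 0

/-- the `j₁d`-partition `α[j]` of `n/h` (condition (2.6.1)): component `k/h`
has parts `α_i^{(k)}/h`. -/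
noncomputable def bracketF (e : ℕ) [NeZero e] (p d : ℕ) (j : ℕ) (α : ZMod e → Multiset ℕ) :
    ℕ → Multiset ℕ :=
  fun k' => if k' < Esys p d j then (α (((hOrd p j * k' : ℕ) : ZMod e))).map (fun r => r / hOrd p j)
  else 0

/-- condition (2.6.1): `h_j` divides all parts `α_i^{(k)}`, and `h_j ∣ k`
whenever `α^{(k)} ≠ ∅`. -/
def Cond261 (e : ℕ) [NeZero e] (p j : ℕ) (α : ZMod e → Multiset ℕ) : Prop :=
  (∀ k, ∀ r ∈ α k, hOrd p j ∣ r) ∧ ∀ k : ZMod e, α k ≠ 0 → hOrd p j ∣ k.val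

/-- `s_{α{j}}(𝒳_j)`. -/
noncomputable def schurBrace (e : ℕ) [NeZero e] (p d : ℕ) (m : ZMod e → ℕ) (xv : BIdx e m → ℂ)
    (j : ℕ) (α : ZMod e → Multiset ℕ) : ℂ :=
  sAlphaSys (Esys p d j) (mmX e m) (vvX e p d m xv j) (braceF e p d j α)

/-- `p_{α[j]}(𝒳_j)` (2.6; the root of unity for the system `𝒳_j` is `ζ^h`). -/
noncomputable def pBracket (e : ℕ) [NeZero e] (p d : ℕ) (ζ : ℂ) (m : ZMod e → ℕ)
    (xv : BIdx e m → ℂ) (j : ℕ) (α : ZMod e → Multiset ℕ) : ℂ :=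
  pAlphaSys (ζ ^ hOrd p j) (Esys p d j) (mmX e m) (vvX e p d m xv j) (bracketF e p d j α)

/-- `l(α[j])`. -/
noncomputable def lenBracket (e : ℕ) [NeZero e] (p d : ℕ) (j : ℕ)
    (α : ZMod e → Multiset ℕ) : ℕ :=
  ∑ k ∈ Finset.range (Esys p d j), (bracketF e p d j α k).card

/-! ### Schur functions and power sums for `σ^q W` (2.10) -/

/-- the `j`-th component `s^j_{α,φ}` of the Schur function `𝐬_{α,φ}` for
`σ^q W` (2.10.1); the character `φ = φ_r` of `Γ_α = ⟨τ^c⟩ ≅ ℤ/(p/c)ℤ` is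
encoded by `r`, via `φ_r(τ^j) = ζ^{drj}` for `c ∣ j`. -/
noncomputable def sTuple (e : ℕ) [NeZero e] (p d q : ℕ) (ζ : ℂ) (m : ZMod e → ℕ)
    (xv : BIdx e m → ℂ) (α : ZMod e → Multiset ℕ) (r : ℕ) (j : ℕ) : ℂ :=
  if csize e d α ∣ j then
    ζ ^ (d * r * j) *
      ∑ i ∈ Finset.range (csize e d α),
        ζ ^ (q * i * d) * schurBrace e p d m xv j ((theta e d)^[i] α)
  else 0

/-- the `j`-th component `p^j_{β,b}` of the power sum `𝐩_{β,b}` for `σ^q W`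
(2.10.2). -/
noncomputable def pTuple (e : ℕ) [NeZero e] (p d : ℕ) (ζ : ℂ) (m : ZMod e → ℕ)
    (xv : BIdx e m → ℂ) (β : ZMod e → Multiset ℕ) (b : ZMod e) (j : ℕ) : ℂ :=
  if Cond261 e p j β then
    (hOrd p j : ℂ) ^ (lenBracket e p d j β) *
      zmpow e ζ (-(((Delta e β : ZMod e) + b) * ((j * d : ℕ) : ZMod e))) *
      pBracket e p d ζ m xv j β
  else 0

/-! ## The model for (extensions of) the irreducible characters of `W` -/

/-- trace of `f` on a subspace (junk `0` if not invariant). -/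
noncomputable def traceOn {V : Type*} [AddCommGroup V] [Module ℂ V]
    (S : Submodule ℂ V) (f : V →ₗ[ℂ] V) : ℂ :=
  if h : ∀ v ∈ S, f v ∈ S then LinearMap.trace ℂ S (f.restrict h) else 0

/-- the scalar by which the torus element `diag dv ∈ G` acts on a highest
weight vector of weight `α`. -/
noncomputable def weightOf (e : ℕ) [NeZero e] (m : ZMod e → ℕ) (α : ZMod e → Multiset ℕ)
    (dv : BIdx e m → ℂ) : ℂ :=
  ∏ b : BIdx e m, dv b ^ (lamOf (α b.1) b.2.val)

/-- the space of highest weight vectors of weight `α` in `V^{⊗n}`: the model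
for the irreducible `W̃`-module `Z_α` (1.3.1, 1.4). -/
noncomputable def hwSubmodule (e n : ℕ) [NeZero e] (m : ZMod e → ℕ)
    (α : ZMod e → Multiset ℕ) : Submodule ℂ (TIdx e n m → ℂ) :=
  (⨅ g ∈ {g | IsUpperUni e m g},
      Module.End.eigenspace (Matrix.mulVecLin (tensorPow e n m g)) 1) ⊓
    ⨅ dv : BIdx e m → ℂ,
      Module.End.eigenspace (Matrix.mulVecLin (tensorPow e n m (Matrix.diagonal dv)))
        (weightOf e m α dv)

/-- the model for the irreducible `W`-module `Z_{α,φ_r}`: the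
`φ_r(τ^c)`-eigenspace of `τ^c` on `Z_α`, where `c = c_{α,p}` and
`φ_r(τ^c) = ζ^{cdr}`. -/
noncomputable def ZSub (e n : ℕ) [NeZero e] (d : ℕ) (m : ZMod e → ℕ)
    (hm : ∀ k, m (k + (d : ZMod e)) = m k) (ζ : ℂ) (α : ZMod e → Multiset ℕ) (r : ℕ) :
    Submodule ℂ (TIdx e n m → ℂ) :=
  hwSubmodule e n m α ⊓
    Module.End.eigenspace (Matrix.mulVecLin ((tauMat e n d m hm) ^ (csize e d α)))
      (ζ ^ (csize e d α * d * r))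

/-- The model for the irreducible character `χ^{α,φ_r}` of `W` and for its
chosen extension `χ̃^{α,φ_r}` to `⟨σ^q⟩ ⋉ W`: the trace of `w` on the model
`Z_{α,φ_r} ⊆ V^{⊗n}`. -/
noncomputable def charExt (e n : ℕ) [NeZero e] (d : ℕ) (m : ZMod e → ℕ)
    (hm : ∀ k, m (k + (d : ZMod e)) = m k) (ζ : ℂ) (α : ZMod e → Multiset ℕ) (r : ℕ)
    (w : Wt e n) : ℂ :=
  traceOn (ZSub e n d m hm ζ α r) (Matrix.mulVecLin (rhoMat e n ζ m w))

/-! ## symbols, a-function, similarity; the reflection representation -/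

/-- the multiset of entries of the symbol `Λ(α) = α + Λ⁰` of type `(r,0)`. -/
noncomputable def entriesSym (e : ℕ) [NeZero e] (m : ZMod e → ℕ) (rsym : ℕ)
    (α : ZMod e → Multiset ℕ) : Multiset ℕ :=
  (Finset.univ : Finset (BIdx e m)).val.map fun b =>
    lamOf (α b.1) b.2.val + rsym * (m b.1 - 1 - b.2.val)

noncomputable def pairMinSum (M : Multiset ℕ) : ℕ :=
  (M.bind fun a => M.map fun b => min a b).sum

/-- the `a`-function (3.5.2) on symbols of type `(rsym, 0)`. -/
noncomputable def aVal (e : ℕ) [NeZero e] (m : ZMod e → ℕ) (rsym : ℕ)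
    (α : ZMod e → Multiset ℕ) : ℕ :=
  pairMinSum (entriesSym e m rsym α) - pairMinSum (entriesSym e m rsym (fun _ => 0))

/-- similarity of symbols: equality of entries with multiplicities. -/
def SimSym (e : ℕ) [NeZero e] (m : ZMod e → ℕ) (rsym : ℕ) (α β : ZMod e → Multiset ℕ) : Prop :=
  entriesSym e m rsym α = entriesSym e m rsym β

/-- the reflection representation `M = ℂ^n` of `W̃` (`w(e_i) = ζ^{a_i} e_{x(i)}`). -/
noncomputable def refMat (e n : ℕ) [NeZero e] (ζ : ℂ) (w : Wt e n) :
    Matrix (Fin n) (Fin n) ℂ :=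
  fun i' i => if i' = w.right i then zmpow e ζ (w.left i').toAdd else 0

/-- The functional `R_q(f)` of (4.2.1), for a function `f` on the coset `σ^q W`. -/
noncomputable def Rq (e p d n : ℕ) [NeZero e] [NeZero n] (hp : p ∣ e) (ζ t : ℂ) (q : ℕ)
    (f : Wt e n → ℂ) : ℂ :=
  (ζ ^ (q * d) * t ^ (d * n) - 1) * (∏ i ∈ Finset.Icc 1 (n - 1), (t ^ (e * i) - 1)) *
    (Nat.card (Wgrp e p n hp) : ℂ)⁻¹ *
    ∑ w ∈ Finset.univ.filter (fun w => inCoset e p n hp q w),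
      (refMat e n ζ w).det * f w / (t • (1 : Matrix (Fin n) (Fin n) ℂ) - refMat e n ζ w).det

/-- `N^*`: the number of reflections in `W`. -/
noncomputable def Nstar (e p n : ℕ) [NeZero e] (hp : p ∣ e) (ζ : ℂ) : ℕ :=
  Nat.card {w : Wt e n // w ∈ Wgrp e p n hp ∧ w ≠ 1 ∧ (refMat e n ζ w - 1).rank = 1}

end GreenII

namespace GreenII

/-- complete homogeneous symmetric polynomial over any commutative ring -/
noncomputable def hR {R : Type*} [CommRing R] (N r : ℕ) (v : Fin N → R) : R :=
  ∑ c ∈ Finset.Nat.antidiagonalTuple N r, ∏ i : Fin N, v i ^ c i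

theorem hR_coeff {R : Type*} [CommRing R] (N r : ℕ) (v : Fin N → R) :
    PowerSeries.coeff r (∏ i : Fin N, PowerSeries.mk (fun q => v i ^ q)) = hR N r v := by
  rw [PowerSeries.coeff_prod, hR, ← Finset.piAntidiag_univ_fin_eq_antidiagonalTuple]
  refine Finset.sum_bij' (fun l _ => ⇑l) (fun f _ => Finsupp.equivFunOnFinite.symm f) ?_ ?_ ?_ ?_ ?_
  · intro l hl
    simp only [Finset.mem_finsuppAntidiag] at hl
    simp [hl.1]
  · intro f hf
    simp only [Finset.mem_piAntidiag] at hf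
    simp [Finset.mem_finsuppAntidiag, hf.1]
  · intro l hl; ext; simp
  · intro f hf; ext; simp
  · intro l hl
    simp

noncomputable def hZ {R : Type*} [CommRing R] (N : ℕ) (z : ℤ) (v : Fin N → R) : R :=
  if 0 ≤ z then hR N z.toNat v else 0

noncomputable def Ppoly {R : Type*} [CommRing R] (N : ℕ) (v : Fin N → R) (l : Fin N) : Polynomial R :=
  ∏ i ∈ Finset.univ.erase l, (1 - Polynomial.C (v i) * Polynomial.X)

theorem Ppoly_deg {R : Type*} [CommRing R] (N : ℕ) (v : Fin N → R) (l : Fin N) (q : ℕ) (hq : N ≤ q) :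
    (Ppoly N v l).coeff q = 0 := by
  apply Polynomial.coeff_eq_zero_of_natDegree_lt
  have : (Ppoly N v l).natDegree ≤ ∑ i ∈ Finset.univ.erase l, 1 := by
    refine (Polynomial.natDegree_prod_le _ _).trans (Finset.sum_le_sum fun i _ => ?_)
    compute_degree
  have h2 : 0 < N := l.pos
  simp at this
  omega

theorem mk_pow_mul {R : Type*} [CommRing R] (a : R) :
    PowerSeries.mk (fun q => a ^ q) * ((1 - Polynomial.C a * Polynomial.X : Polynomial R) : PowerSeries R) = 1 := by
  ext q
  rcases q with _ | q
  · simp [mul_sub, PowerSeries.coeff_mul]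
  · simp only [Polynomial.coe_sub, Polynomial.coe_one, Polynomial.coe_mul, Polynomial.coe_C,
      Polynomial.coe_X, mul_sub, mul_one, map_sub, PowerSeries.coeff_mk]
    rw [← mul_assoc, PowerSeries.coeff_succ_mul_X, mul_comm, PowerSeries.coeff_C_mul]
    simp [PowerSeries.coeff_one, pow_succ, mul_comm]

theorem H_mul_P {R : Type*} [CommRing R] (N : ℕ) (v : Fin N → R) (l : Fin N) :
    (∏ i : Fin N, PowerSeries.mk (fun q => v i ^ q)) * ((Ppoly N v l : Polynomial R) : PowerSeries R)
      = PowerSeries.mk (fun q => v l ^ q) := by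
  rw [← Finset.mul_prod_erase Finset.univ _ (Finset.mem_univ l), mul_assoc]
  have : ((Ppoly N v l : Polynomial R) : PowerSeries R) = ∏ i ∈ Finset.univ.erase l,
      ((1 - Polynomial.C (v i) * Polynomial.X : Polynomial R) : PowerSeries R) := by
    rw [Ppoly, ← Polynomial.coeToPowerSeries.ringHom_apply, map_prod]
    rfl
  rw [this, ← Finset.prod_mul_distrib, Finset.prod_congr rfl (fun i _ => mk_pow_mul (v i))]
  simp

theorem pow_eq_sum {R : Type*} [CommRing R] (N : ℕ) (v : Fin N → R) (l : Fin N) (α : ℕ) :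
    v l ^ α = ∑ j : Fin N, hZ N ((α : ℤ) - (N - 1) + j) v * (Ppoly N v l).coeff (N - 1 - j) := by
  have h := congrArg (PowerSeries.coeff α) (H_mul_P N v l)
  rw [PowerSeries.coeff_mk, PowerSeries.coeff_mul,
    Finset.Nat.sum_antidiagonal_eq_sum_range_succ_mk] at h
  rw [← h]
  simp only [hR_coeff, Polynomial.coeff_coe]
  -- reindex
  rw [← Finset.sum_range_reflect]
  have e1 : ∀ j ∈ Finset.range (α + 1),
      hR N (α + 1 - 1 - j) v * (Ppoly N v l).coeff (α - (α + 1 - 1 - j))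
      = hZ N ((α : ℤ) - j) v * (Ppoly N v l).coeff j := by
    intro j hj
    have hj' : j ≤ α := by simpa [Nat.lt_succ_iff] using hj
    rw [hZ, if_pos (by omega)]
    congr 2
    · omega
    · omega
  rw [Finset.sum_congr rfl e1]
  have e2 : ∑ j ∈ Finset.range (α + 1), hZ N ((α : ℤ) - j) v * (Ppoly N v l).coeff j
      = ∑ j ∈ Finset.range (α + 1 + N), hZ N ((α : ℤ) - j) v * (Ppoly N v l).coeff j := by
    apply Finset.sum_subset
    · intro x; simp; omega
    · intro x _ hx
      rw [hZ, if_neg, zero_mul]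
      simp at hx; omega
  have e3 : ∑ j ∈ Finset.range N, hZ N ((α : ℤ) - j) v * (Ppoly N v l).coeff j
      = ∑ j ∈ Finset.range (α + 1 + N), hZ N ((α : ℤ) - j) v * (Ppoly N v l).coeff j := by
    apply Finset.sum_subset
    · intro x; simp; omega
    · intro x _ hx
      rw [Ppoly_deg, mul_zero]
      simpa using hx
  rw [e2, ← e3, ← Finset.sum_range_reflect, Finset.sum_range]
  refine Finset.sum_congr rfl fun j _ => ?_
  have := j.isLt
  congr 2
  omega

/-- Jacobi-Trudi versus bialternants. -/
theorem jacobi_trudi {R : Type*} [CommRing R] (N : ℕ) (lam : Fin N → ℕ) (v : Fin N → R) :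
    Matrix.det (Matrix.of fun i l : Fin N => v l ^ (lam i + (N - 1 - (i : ℕ)))) =
      Matrix.det (Matrix.of fun i j : Fin N => hZ N ((lam i + j : ℤ) - i) v) *
      Matrix.det (Matrix.of fun i l : Fin N => v l ^ (N - 1 - (i : ℕ))) := by
  have key : ∀ lam : Fin N → ℕ,
      (Matrix.of fun i l : Fin N => v l ^ (lam i + (N - 1 - (i : ℕ)))) =
      (Matrix.of fun i j : Fin N => hZ N ((lam i + j : ℤ) - i) v) *
      (Matrix.of fun j l : Fin N => (Ppoly N v l).coeff (N - 1 - j)) := by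
    intro lam
    ext i l
    rw [Matrix.mul_apply, Matrix.of_apply, pow_eq_sum]
    refine Finset.sum_congr rfl fun j _ => ?_
    simp only [Matrix.of_apply]
    have := i.isLt
    congr 2
    omega
  have h0 := key (fun _ => 0)
  simp only [zero_add] at h0
  rw [key lam, h0, Matrix.det_mul, Matrix.det_mul]
  have : Matrix.det (Matrix.of fun i j : Fin N => hZ N (((0:ℕ) + j : ℤ) - i) v) = 1 := by
    rw [Matrix.det_of_upperTriangular]
    · apply Finset.prod_eq_one
      intro i _
      simp [hZ, hR, Finset.Nat.antidiagonalTuple_zero_right]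
    · intro i j hij
      simp only [id] at hij
      rw [Matrix.of_apply, hZ, if_neg]
      have : (j:ℕ) < i := hij
      push_cast
      omega
  rw [this, one_mul]

end GreenII

namespace GreenII

open MvPolynomial

section Weyl
set_option linter.unusedSectionVars false
variable {κ : Type} [Fintype κ] {N : κ → ℕ}

abbrev JJ (N : κ → ℕ) := Σ k : κ, Fin (N k)

noncomputable def Dop (a : JJ N) (f : MvPolynomial (JJ N) ℂ) : MvPolynomial (JJ N) ℂ :=
  X a * pderiv a f

theorem coeff_Dop (a : JJ N) (f : MvPolynomial (JJ N) ℂ) (ν : JJ N →₀ ℕ) :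
    coeff ν (Dop a f) = (ν a : ℂ) * coeff ν f := by
  induction f using MvPolynomial.induction_on' with
  | monomial u r =>
    rw [Dop, X_mul_pderiv_monomial, coeff_smul, coeff_monomial]
    split_ifs with h
    · subst h; simp
    · simp
  | add p q hp hq =>
    rw [Dop] at *
    rw [map_add, mul_add, coeff_add, coeff_add, ← Dop, ← Dop] at *
    rw [hp, hq, mul_add]

theorem Dop_mul (a : JJ N) (f g : MvPolynomial (JJ N) ℂ) :
    Dop a (f * g) = Dop a f * g + f * Dop a g := by
  simp only [Dop, pderiv_mul]; ring

theorem Dop_add (a : JJ N) (f g : MvPolynomial (JJ N) ℂ) :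
    Dop a (f + g) = Dop a f + Dop a g := by
  simp only [Dop, map_add]; ring

def BA (y : JJ N → ℤ) : Prop := ∀ a b : JJ N, a.1 = b.1 → a.2.val ≤ b.2.val → y b ≤ y a

def Dom (ν μ : JJ N → ℕ) : Prop :=
  ∀ y : JJ N → ℤ, BA y → ∑ a, y a * (ν a : ℤ) ≤ ∑ a, y a * (μ a : ℤ)

theorem Dom.add {ν μ ν' μ' : JJ N → ℕ} (h : Dom ν μ) (h' : Dom ν' μ') :
    Dom (ν + ν') (μ + μ') := by
  intro y hy
  have := h y hy
  have := h' y hy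
  simp only [Pi.add_apply, Nat.cast_add, mul_add, Finset.sum_add_distrib]
  linarith

theorem Dom.eq_of {ν μ : JJ N → ℕ} (h : Dom ν μ) (hν : BA (fun a => (ν a : ℤ)))
    (hn : ∑ a, ((ν a : ℤ)) ^ 2 = ∑ a, ((μ a : ℤ)) ^ 2) : ν = μ := by
  have h1 := h _ hν
  have h2 : ∑ a, ((μ a : ℤ) - ν a) ^ 2 ≤ 0 := by
    have : ∑ a, ((μ a : ℤ) - ν a) ^ 2 = ∑ a, ((μ a : ℤ)) ^ 2 - 2 * ∑ a, (ν a : ℤ) * μ a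
        + ∑ a, ((ν a : ℤ)) ^ 2 := by
      rw [Finset.mul_sum, ← Finset.sum_sub_distrib, ← Finset.sum_add_distrib]
      exact Finset.sum_congr rfl fun a _ => by ring
    have h3 : ∑ a, (ν a : ℤ) * ν a = ∑ a, ((ν a : ℤ)) ^ 2 :=
      Finset.sum_congr rfl fun a _ => by ring
    rw [this]; linarith
  have h3 := (Finset.sum_eq_zero_iff_of_nonneg (fun a _ => sq_nonneg ((μ a : ℤ) - ν a))).1
    (le_antisymm h2 (Finset.sum_nonneg fun a _ => sq_nonneg _))
  funext a
  have := pow_eq_zero_iff (two_ne_zero) |>.1 (h3 a (Finset.mem_univ a))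
  omega

/-- product of alternants -/
noncomputable def Alt (lam : JJ N → ℕ) : MvPolynomial (JJ N) ℂ :=
  ∏ k, Matrix.det (Matrix.of fun i l : Fin (N k) =>
    (X (⟨k, l⟩ : JJ N) : MvPolynomial (JJ N) ℂ) ^ lam ⟨k, i⟩)

noncomputable def wexp (lam : JJ N → ℕ) (w : ∀ k, Equiv.Perm (Fin (N k))) : JJ N →₀ ℕ :=
  Finsupp.equivFunOnFinite.symm (fun a => lam ⟨a.1, w a.1 a.2⟩)

theorem Alt_eq_sum (lam : JJ N → ℕ) :
    Alt lam = ∑ w : ∀ k, Equiv.Perm (Fin (N k)),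
      monomial (wexp lam w) (∏ k, ((Equiv.Perm.sign (w k) : ℤ) : ℂ)) := by
  simp only [Alt, Matrix.det_apply, Matrix.of_apply]
  rw [Finset.prod_univ_sum, Fintype.piFinset_univ]
  refine Finset.sum_congr rfl fun w _ => ?_
  rw [monomial_eq]
  have h1 : ((wexp lam w).prod fun n e => (X n : MvPolynomial (JJ N) ℂ) ^ e)
      = ∏ k, ∏ l, (X (⟨k, l⟩ : JJ N) : MvPolynomial (JJ N) ℂ) ^ lam ⟨k, w k l⟩ := by
    rw [Finsupp.prod_fintype _ _ (fun i => pow_zero _), Fintype.prod_sigma]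
    rfl
  rw [h1, map_prod, ← Finset.prod_mul_distrib]
  refine Finset.prod_congr rfl fun k _ => ?_
  rw [Units.smul_def, zsmul_eq_mul]
  simp

theorem coeff_Alt_ne {lam : JJ N → ℕ} {ν : JJ N →₀ ℕ} (h : coeff ν (Alt lam) ≠ 0) :
    ∃ w : ∀ k, Equiv.Perm (Fin (N k)), ν = wexp lam w := by
  rw [Alt_eq_sum, coeff_sum] at h
  obtain ⟨w, _, hw⟩ := Finset.exists_ne_zero_of_sum_ne_zero h
  rw [coeff_monomial] at hw
  exact ⟨w, by by_contra hc; rw [if_neg (fun h => hc h.symm)] at hw; exact hw rfl⟩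

theorem coeff_Alt_self {lam : JJ N → ℕ}
    (hinj : ∀ k, Function.Injective fun i : Fin (N k) => lam ⟨k, i⟩) :
    coeff (Finsupp.equivFunOnFinite.symm lam) (Alt lam) = 1 := by
  rw [Alt_eq_sum, coeff_sum, Finset.sum_eq_single 1]
  · rw [coeff_monomial, if_pos]
    · simp
    · ext a; simp [wexp]
  · intro w _ hw
    rw [coeff_monomial, if_neg]
    intro h
    apply hw
    funext k
    ext i : 1
    have := DFunLike.congr_fun h ⟨k, i⟩
    exact hinj k (by simpa [wexp] using this)
  · simp

theorem dom_wexp {lam : JJ N → ℕ} (hlam : BA (fun a => (lam a : ℤ)))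
    (w : ∀ k, Equiv.Perm (Fin (N k))) : Dom (⇑(wexp lam w)) lam := by
  intro y hy
  rw [Fintype.sum_sigma, Fintype.sum_sigma]
  refine Finset.sum_le_sum fun k _ => ?_
  have hm : Monovary (fun i => y ⟨k, i⟩) (fun i : Fin (N k) => (lam ⟨k, i⟩ : ℤ)) := by
    intro i j hij
    rcases le_total i j with h | h
    · exact absurd hij (not_lt.2 (hlam ⟨k, i⟩ ⟨k, j⟩ rfl h))
    · exact hy ⟨k, j⟩ ⟨k, i⟩ rfl h
  exact hm.sum_mul_comp_perm_le_sum_mul (σ := w k)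

theorem norm_wexp (lam : JJ N → ℕ) (w : ∀ k, Equiv.Perm (Fin (N k))) :
    ∑ a, ((wexp lam w a : ℤ)) ^ 2 = ∑ a, ((lam a : ℤ)) ^ 2 := by
  rw [Fintype.sum_sigma, Fintype.sum_sigma]
  refine Finset.sum_congr rfl fun k _ => ?_
  exact Equiv.sum_comp (w k) (fun i => ((lam ⟨k, i⟩ : ℤ)) ^ 2)

theorem rename_Alt (lam : JJ N → ℕ) (a b : JJ N) (hab : a ≠ b) (h1 : a.1 = b.1) :
    rename (Equiv.swap a b) (Alt lam) = - Alt lam := by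
  obtain ⟨k, i⟩ := a
  obtain ⟨k', j⟩ := b
  obtain rfl : k = k' := h1
  have hij : i ≠ j := fun h => hab (by rw [h])
  unfold Alt
  rw [map_prod, ← Finset.mul_prod_erase _ _ (Finset.mem_univ k),
    ← Finset.mul_prod_erase Finset.univ _ (Finset.mem_univ k), ← neg_mul]
  congr 1
  · rw [AlgHom.map_det]
    have : (rename (Equiv.swap (⟨k, i⟩ : JJ N) ⟨k, j⟩)).mapMatrix
        (Matrix.of fun i l : Fin (N k) =>
          (X (⟨k, l⟩ : JJ N) : MvPolynomial (JJ N) ℂ) ^ lam ⟨k, i⟩)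
        = (Matrix.of fun i l : Fin (N k) =>
          (X (⟨k, l⟩ : JJ N) : MvPolynomial (JJ N) ℂ) ^ lam ⟨k, i⟩).submatrix id (Equiv.swap i j) := by
      ext1 r l
      simp only [AlgHom.mapMatrix_apply, Matrix.map_apply, Matrix.of_apply, Matrix.submatrix_apply,
        map_pow, rename_X, id]
      congr 2
      by_cases hli : l = i
      · subst hli; simp
      by_cases hlj : l = j
      · subst hlj; simp
      rw [Equiv.swap_apply_of_ne_of_ne, Equiv.swap_apply_of_ne_of_ne hli hlj]
      · simpa using hli
      · simpa using hlj
    rw [this, Matrix.det_permute', Equiv.Perm.sign_swap hij]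
    simp
  · refine Finset.prod_congr rfl fun k' hk' => ?_
    have hk : k' ≠ k := (Finset.mem_erase.1 hk').1
    rw [AlgHom.map_det]
    congr 1
    ext1 r l
    simp only [AlgHom.mapMatrix_apply, Matrix.map_apply, Matrix.of_apply, map_pow, rename_X]
    rw [Equiv.swap_apply_of_ne_of_ne]
    · simp [hk]
    · simp [hk]

noncomputable def Plt (N : κ → ℕ) : Finset (JJ N × JJ N) :=
  Finset.univ.filter fun p => p.1.1 = p.2.1 ∧ p.1.2.val < p.2.2.val

noncomputable def Pne (N : κ → ℕ) : Finset (JJ N × JJ N) :=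
  Finset.univ.filter fun p => p.1.1 = p.2.1 ∧ p.1 ≠ p.2

theorem sum_Pne {M : Type*} [AddCommMonoid M] (g : JJ N × JJ N → M) :
    ∑ p ∈ Pne N, g p = ∑ p ∈ Plt N, (g p + g p.swap) := by
  have h1 : Pne N = Plt N ∪ (Plt N).image Prod.swap := by
    ext ⟨⟨k, i⟩, ⟨k', j⟩⟩
    simp only [Pne, Plt, Finset.mem_union, Finset.mem_filter, Finset.mem_univ, true_and,
      Finset.mem_image, Prod.exists]
    constructor
    · rintro ⟨h, hne⟩
      subst h
      have : i ≠ j := fun h => hne (by rw [h])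
      rcases lt_or_gt_of_ne this with h | h
      · exact Or.inl ⟨rfl, h⟩
      · exact Or.inr ⟨⟨k, j⟩, ⟨k, i⟩, ⟨rfl, h⟩, rfl⟩
    · rintro (⟨h, hl⟩ | ⟨a, b, ⟨h, hl⟩, he⟩)
      · subst h
        refine ⟨rfl, fun h => ?_⟩
        simp only [Sigma.mk.injEq, heq_eq_eq, true_and] at h
        subst h
        exact lt_irrefl _ hl
      · simp only [Prod.swap_prod_mk, Prod.mk.injEq] at he
        obtain ⟨rfl, rfl⟩ := he
        refine ⟨h.symm, fun h => ?_⟩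
        rw [h] at hl
        exact lt_irrefl _ hl
  have h2 : Disjoint (Plt N) ((Plt N).image Prod.swap) := by
    rw [Finset.disjoint_left]
    rintro ⟨a, b⟩ hp hq
    simp only [Plt, Finset.mem_filter, Finset.mem_univ, true_and, Finset.mem_image, Prod.exists,
      Prod.swap_prod_mk, Prod.mk.injEq] at hp hq
    obtain ⟨a', b', hq, rfl, rfl⟩ := hq
    omega
  rw [h1, Finset.sum_union h2, Finset.sum_image (fun a _ b _ h => Prod.swap_injective h),
    ← Finset.sum_add_distrib]

def del (N : κ → ℕ) (a : JJ N) : ℕ := N a.1 - 1 - a.2.val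

theorem BA_del : BA (fun a : JJ N => (del N a : ℤ)) := by
  rintro ⟨k, i⟩ ⟨k', j⟩ h hl
  simp only at h
  subst h
  simp only [del] at *
  have := i.isLt
  have := j.isLt
  omega

theorem Alt_del : Alt (del N) = ∏ p ∈ Plt N, ((X p.1 : MvPolynomial (JJ N) ℂ) - X p.2) := by
  have h : ∀ k, Matrix.det (Matrix.of fun i l : Fin (N k) =>
      (X (⟨k, l⟩ : JJ N) : MvPolynomial (JJ N) ℂ) ^ del N ⟨k, i⟩)
      = ∏ i : Fin (N k), ∏ j ∈ Finset.Ioi i,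
        ((X (⟨k, i⟩ : JJ N) : MvPolynomial (JJ N) ℂ) - X ⟨k, j⟩) := by
    intro k
    have := Matrix.det_projVandermonde (n := N k) (fun _ => (1 : MvPolynomial (JJ N) ℂ))
      (fun l => X (⟨k, l⟩ : JJ N))
    rw [← Matrix.det_transpose]
    simp only [one_mul] at this
    rw [← this]
    congr 1
    ext1 l i
    simp only [Matrix.transpose_apply, Matrix.of_apply, Matrix.projVandermonde_apply, one_pow,
      one_mul, del, Fin.val_rev]
    congr 1
    omega
  rw [Alt, Finset.prod_congr rfl fun k _ => h k]
  refine (Fintype.prod_sigma (fun a : JJ N => ∏ j ∈ Finset.Ioi a.2,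
    ((X a : MvPolynomial (JJ N) ℂ) - X (⟨a.1, j⟩ : JJ N)))).symm.trans ?_
  rw [Finset.prod_sigma']
  refine Finset.prod_bij' (fun x _ => (x.1, ⟨x.1.1, x.2⟩))
    (fun p hp => ⟨p.1, Fin.cast (congrArg N (Finset.mem_filter.1 hp).2.1).symm p.2.2⟩) ?_ ?_ ?_ ?_ ?_
  · rintro ⟨a, j⟩ h
    simpa [Plt] using h
  · rintro ⟨⟨k, i⟩, ⟨k', j⟩⟩ h
    have h' := (Finset.mem_filter.1 h).2
    obtain ⟨h1, h2⟩ := h'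
    simp only at h1
    subst h1
    simpa using h2
  · rintro ⟨a, j⟩ h; rfl
  · rintro ⟨⟨k, i⟩, ⟨k', j⟩⟩ h
    obtain ⟨h1, h2⟩ := (Finset.mem_filter.1 h).2
    simp only at h1
    subst h1
    rfl
  · rintro ⟨a, j⟩ h; rfl

end Weyl
end GreenII

namespace GreenII

open MvPolynomial

section Weyl
set_option linter.unusedSectionVars false
variable {κ : Type} [Fintype κ] {N : κ → ℕ}

theorem Dop_prod {ι : Type*} [DecidableEq ι] (a : JJ N) (s : Finset ι)
    (f : ι → MvPolynomial (JJ N) ℂ) :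
    Dop a (∏ p ∈ s, f p) = ∑ p ∈ s, (∏ q ∈ s.erase p, f q) * Dop a (f p) := by
  induction s using Finset.induction_on with
  | empty => simp [Dop]
  | insert i s hi ih =>
    rw [Finset.prod_insert hi, Dop_mul, ih, Finset.sum_insert hi, Finset.erase_insert hi,
      mul_comm (Dop a (f i)), Finset.mul_sum]
    refine congrArg _ (Finset.sum_congr rfl fun p hp => ?_)
    have h1 : p ≠ i := fun h => hi (h ▸ hp)
    have h2 : i ∉ s.erase p := fun h => hi (Finset.mem_of_mem_erase h)
    rw [Finset.erase_insert_of_ne h1.symm, Finset.prod_insert h2, mul_assoc]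

theorem sum_Dop_X (G : MvPolynomial (JJ N) ℂ) (b : JJ N) :
    ∑ a, Dop a G * Dop a (X b) = X b * Dop b G := by
  rw [Finset.sum_eq_single b]
  · simp only [Dop, pderiv_X_self]; ring
  · intro a _ hab
    simp [Dop, pderiv_X_of_ne hab.symm]
  · simp

theorem Dop_sub (a : JJ N) (f g : MvPolynomial (JJ N) ℂ) :
    Dop a (f - g) = Dop a f - Dop a g := by
  simp only [Dop, map_sub]; ring

theorem cross_term (G : MvPolynomial (JJ N) ℂ) (Q : JJ N × JJ N → MvPolynomial (JJ N) ℂ)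
    (hQ : ∀ p ∈ Plt N, (X p.1 - X p.2) * Q p = (X p.1 + X p.2) * (Dop p.1 G - Dop p.2 G)) :
    2 * ∑ a, Dop a G * Dop a (Alt (del N)) =
      Alt (del N) * ∑ p ∈ Plt N, Q p + Alt (del N) * ∑ p ∈ Plt N, (Dop p.1 G + Dop p.2 G) := by
  have h1 : ∑ a, Dop a G * Dop a (Alt (del N)) = ∑ p ∈ Plt N,
      (∏ q ∈ (Plt N).erase p, ((X q.1 : MvPolynomial (JJ N) ℂ) - X q.2)) *
        (X p.1 * Dop p.1 G - X p.2 * Dop p.2 G) := by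
    simp only [Alt_del, Dop_prod, Finset.mul_sum]
    rw [Finset.sum_comm]
    refine Finset.sum_congr rfl fun p _ => ?_
    rw [← sum_Dop_X, ← sum_Dop_X, ← Finset.sum_sub_distrib, Finset.mul_sum]
    refine Finset.sum_congr rfl fun a _ => ?_
    rw [Dop_sub]; ring
  rw [h1, Finset.mul_sum, Finset.mul_sum, Finset.mul_sum, ← Finset.sum_add_distrib]
  refine Finset.sum_congr rfl fun p hp => ?_
  have h2 : Alt (del N) = (X p.1 - X p.2) *
      (∏ q ∈ (Plt N).erase p, ((X q.1 : MvPolynomial (JJ N) ℂ) - X q.2)) := by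
    rw [Alt_del, Finset.mul_prod_erase (Plt N) (fun q => (X q.1 : MvPolynomial (JJ N) ℂ) - X q.2) hp]
  rw [h2]
  linear_combination
    (-(∏ q ∈ (Plt N).erase p, ((X q.1 : MvPolynomial (JJ N) ℂ) - X q.2))) * hQ p hp

theorem hom_term (G : MvPolynomial (JJ N) ℂ) (lam : JJ N → ℕ)
    (hdom : ∀ ν : JJ N →₀ ℕ, coeff ν G ≠ 0 → Dom (⇑ν) lam) :
    ∃ c : ℂ, ∑ p ∈ Plt N, (Dop p.1 G + Dop p.2 G) = C c * G := by
  let y : JJ N → ℤ := fun a => ((Finset.univ.filter fun b : JJ N => a.1 = b.1 ∧ a ≠ b).card : ℤ)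
  have hy : ∀ a b : JJ N, a.1 = b.1 → y a = y b := by
    have hy1 : ∀ a : JJ N, y a = ((Finset.univ.filter fun b : JJ N => a.1 = b.1).card : ℤ) - 1 := by
      intro a
      have : (Finset.univ.filter fun b : JJ N => a.1 = b.1 ∧ a ≠ b)
          = (Finset.univ.filter fun b : JJ N => a.1 = b.1).erase a := by
        ext b; simp [and_comm, eq_comm]
      have h2 : a ∈ (Finset.univ.filter fun b : JJ N => a.1 = b.1) := by simp
      have h3 := Finset.card_pos.2 ⟨a, h2⟩
      simp only [y]
      rw [this, Finset.card_erase_of_mem h2]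
      omega
    intro a b hab
    rw [hy1, hy1, hab]
  have hy1 : BA y := fun a b h _ => (hy a b h).ge
  have hy2 : BA (-y) := fun a b h _ => by simp [hy a b h]
  refine ⟨((∑ a, y a * (lam a : ℤ) : ℤ) : ℂ), ?_⟩
  have e1 : ∑ p ∈ Plt N, (Dop p.1 G + Dop p.2 G) = ∑ a, C ((y a : ℤ) : ℂ) * Dop a G := by
    have := sum_Pne (N := N) (fun p => Dop p.1 G)
    simp only [Prod.fst_swap] at this
    rw [← this, Pne, Finset.sum_filter, Fintype.sum_prod_type]
    refine Finset.sum_congr rfl fun a _ => ?_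
    dsimp only
    rw [← Finset.sum_filter, Finset.sum_const, nsmul_eq_mul]
    simp [y]
  rw [e1]
  ext ν
  rw [coeff_sum, coeff_C_mul]
  simp only [coeff_C_mul, coeff_Dop]
  by_cases h : coeff ν G = 0
  · simp [h]
  have d1 := hdom ν h y hy1
  have d2 := hdom ν h _ hy2
  simp only [Pi.neg_apply, neg_mul, Finset.sum_neg_distrib, neg_le_neg_iff] at d2
  rw [le_antisymm d2 d1]
  push_cast
  rw [Finset.sum_mul]
  exact Finset.sum_congr rfl fun a _ => by ring

theorem weyl (G : MvPolynomial (JJ N) ℂ) (lam : JJ N → ℕ)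
    (hlam : BA (fun a => (lam a : ℤ)))
    (hdom : ∀ ν : JJ N →₀ ℕ, coeff ν G ≠ 0 → Dom (⇑ν) lam)
    (hcoef : coeff (Finsupp.equivFunOnFinite.symm lam) G = 1)
    (hsym : ∀ a b : JJ N, a ≠ b → a.1 = b.1 → rename (Equiv.swap a b) G = G)
    (Q : JJ N × JJ N → MvPolynomial (JJ N) ℂ)
    (hQ : ∀ p ∈ Plt N, (X p.1 - X p.2) * Q p = (X p.1 + X p.2) * (Dop p.1 G - Dop p.2 G))
    (c : ℂ) (hcas : ∑ a, Dop a (Dop a G) + ∑ p ∈ Plt N, Q p = C c * G) :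
    G * Alt (del N) = Alt (lam + del N) := by
  obtain ⟨c', hc'⟩ := hom_term G lam hdom
  set A := Alt (del N) with hA
  have hcross := cross_term G Q hQ
  rw [← hA, hc'] at hcross
  -- Laplacian of A
  have hLA : ∑ a, Dop a (Dop a A) = C ((∑ a, ((del N a : ℤ)) ^ 2 : ℤ) : ℂ) * A := by
    ext ν
    rw [coeff_sum, coeff_C_mul]
    simp only [coeff_Dop]
    by_cases h : coeff ν A = 0
    · simp [h]
    obtain ⟨w, rfl⟩ := coeff_Alt_ne h
    rw [← norm_wexp _ w]
    push_cast
    rw [Finset.sum_mul]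
    exact Finset.sum_congr rfl fun a _ => by ring
  obtain ⟨c₂, hLH⟩ : ∃ c₂ : ℂ, ∑ a, Dop a (Dop a (G * A)) = C c₂ * (G * A) := by
    refine ⟨c + c' + ((∑ a, ((del N a : ℤ)) ^ 2 : ℤ) : ℂ), ?_⟩
    have e : ∑ a, Dop a (Dop a (G * A)) = (∑ a, Dop a (Dop a G)) * A
        + 2 * ∑ a, Dop a G * Dop a A + G * ∑ a, Dop a (Dop a A) := by
      rw [Finset.sum_mul, Finset.mul_sum, Finset.mul_sum, ← Finset.sum_add_distrib,
        ← Finset.sum_add_distrib]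
      refine Finset.sum_congr rfl fun a _ => ?_
      simp only [Dop_mul, Dop_add]; ring
    rw [e, hcross, hLA, C_add, C_add]
    linear_combination A * hcas
  have hinj : ∀ (mu : JJ N → ℕ), BA (fun a => (mu a : ℤ)) → ∀ k,
      Function.Injective fun i : Fin (N k) => (mu + del N) ⟨k, i⟩ := by
    intro mu hmu k i j hij
    simp only [Pi.add_apply, del] at hij
    have := i.isLt
    have := j.isLt
    ext
    rcases le_total i.val j.val with h | h
    · have := hmu ⟨k, i⟩ ⟨k, j⟩ rfl h
      simp only at this
      omega
    · have := hmu ⟨k, j⟩ ⟨k, i⟩ rfl h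
      simp only at this
      omega
  have hBA : BA (fun a => (((lam + del N) a : ℕ) : ℤ)) := by
    intro a b h1 h2
    have := hlam a b h1 h2
    have := BA_del a b h1 h2
    simp only [Pi.add_apply, Nat.cast_add] at *
    linarith
  have hdomH : ∀ ν : JJ N →₀ ℕ, coeff ν (G * A) ≠ 0 → Dom (⇑ν) (lam + del N) := by
    intro ν hν
    rw [coeff_mul] at hν
    obtain ⟨⟨x, y⟩, hxy, hne⟩ := Finset.exists_ne_zero_of_sum_ne_zero hν
    rw [Finset.HasAntidiagonal.mem_antidiagonal] at hxy
    dsimp only at hxy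
    subst hxy
    have h1 := hdom x (left_ne_zero_of_mul hne)
    obtain ⟨w, hw⟩ := coeff_Alt_ne (right_ne_zero_of_mul hne)
    have h2 := dom_wexp (BA_del (N := N)) w
    rw [← hw] at h2
    exact h1.add h2
  have hδ1 : coeff (Finsupp.equivFunOnFinite.symm (del N)) A = 1 := by
    have := coeff_Alt_self (lam := (0 + del N : JJ N → ℕ)) (hinj 0 (fun a b _ _ => by simp))
    rwa [zero_add] at this
  have hcH : coeff (Finsupp.equivFunOnFinite.symm (lam + del N)) (G * A) = 1 := by
    rw [coeff_mul, Finset.sum_eq_single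
      (Finsupp.equivFunOnFinite.symm lam, Finsupp.equivFunOnFinite.symm (del N))]
    · rw [hcoef, hδ1, mul_one]
    · rintro ⟨x, y⟩ hxy hne
      rw [Finset.HasAntidiagonal.mem_antidiagonal] at hxy
      dsimp only at hxy
      by_contra hcon
      apply hne
      have h1 := hdom x (left_ne_zero_of_mul hcon)
      obtain ⟨w, hw⟩ := coeff_Alt_ne (right_ne_zero_of_mul hcon)
      have h2 := dom_wexp (BA_del (N := N)) w
      have h3 := norm_wexp (del N) w
      rw [← hw] at h2 h3
      have hfun : ∀ a, x a + y a = lam a + del N a := fun a => by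
        simpa using DFunLike.congr_fun hxy a
      have hyd : ⇑y = del N := by
        have k1 := h1 _ (BA_del (N := N))
        have k2 := h2 _ (BA_del (N := N))
        have k3 : ∑ a, (del N a : ℤ) * (y a : ℤ) = ∑ a, (del N a : ℤ) * (del N a : ℤ) := by
          apply le_antisymm k2
          have : ∑ a, (del N a : ℤ) * (x a : ℤ) + ∑ a, (del N a : ℤ) * (y a : ℤ)
              = ∑ a, (del N a : ℤ) * (lam a : ℤ) + ∑ a, (del N a : ℤ) * (del N a : ℤ) := by
            rw [← Finset.sum_add_distrib, ← Finset.sum_add_distrib]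
            refine Finset.sum_congr rfl fun a _ => ?_
            rw [← mul_add, ← mul_add]
            have := hfun a
            congr 1
            exact_mod_cast this
          linarith
        have k4 : ∑ a, ((y a : ℤ) - del N a) ^ 2 = 0 := by
          have : ∑ a, ((y a : ℤ) - del N a) ^ 2 = ∑ a, ((y a : ℤ)) ^ 2
              - 2 * ∑ a, (del N a : ℤ) * y a + ∑ a, ((del N a : ℤ)) ^ 2 := by
            rw [Finset.mul_sum, ← Finset.sum_sub_distrib, ← Finset.sum_add_distrib]
            exact Finset.sum_congr rfl fun a _ => by ring
          rw [this, k3, h3]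
          simp only [sq]; ring
        rw [Finset.sum_eq_zero_iff_of_nonneg (fun a _ => sq_nonneg _)] at k4
        funext a
        have := pow_eq_zero_iff (two_ne_zero) |>.1 (k4 a (Finset.mem_univ a))
        omega
      refine Prod.ext ?_ ?_
      · ext a
        have := hfun a
        rw [hyd] at this
        simpa using this
      · ext a
        simp [hyd]
    · intro h
      exact absurd (Finset.HasAntidiagonal.mem_antidiagonal.2 (by ext a; simp)) h
  have hC : c₂ = ((∑ a, (((lam + del N) a : ℕ) : ℤ) ^ 2 : ℤ) : ℂ) := by
    have := congrArg (coeff (Finsupp.equivFunOnFinite.symm (lam + del N))) hLH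
    rw [coeff_sum, coeff_C_mul] at this
    simp only [coeff_Dop, hcH, mul_one] at this
    rw [← this]
    push_cast
    exact Finset.sum_congr rfl fun a _ => by simp [sq]
  have hnormH : ∀ ν : JJ N →₀ ℕ, coeff ν (G * A) ≠ 0 →
      ∑ a, ((ν a : ℤ)) ^ 2 = ∑ a, (((lam + del N) a : ℕ) : ℤ) ^ 2 := by
    intro ν hν
    have := congrArg (coeff ν) hLH
    rw [coeff_sum, coeff_C_mul] at this
    simp only [coeff_Dop, ← mul_assoc] at this
    rw [← Finset.sum_mul] at this
    have := mul_right_cancel₀ hν this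
    rw [hC] at this
    have h2 : ((∑ a, ((ν a : ℤ)) ^ 2 : ℤ) : ℂ)
        = ((∑ a, (((lam + del N) a : ℕ) : ℤ) ^ 2 : ℤ) : ℂ) := by
      rw [← this]; push_cast
      exact Finset.sum_congr rfl fun a _ => by ring
    exact_mod_cast h2
  -- the difference
  by_contra hne
  set U := G * A - Alt (lam + del N) with hU
  have hU0 : U ≠ 0 := sub_ne_zero.2 hne
  have hUs : ∀ ν : JJ N →₀ ℕ, coeff ν U ≠ 0 → Dom (⇑ν) (lam + del N) ∧
      ∑ a, ((ν a : ℤ)) ^ 2 = ∑ a, (((lam + del N) a : ℕ) : ℤ) ^ 2 := by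
    intro ν hν
    by_cases h : coeff ν (G * A) = 0
    · have : coeff ν (Alt (lam + del N)) ≠ 0 := by
        intro h'
        apply hν
        rw [hU, coeff_sub, h, h', sub_zero]
      obtain ⟨w, rfl⟩ := coeff_Alt_ne this
      exact ⟨dom_wexp hBA w, norm_wexp _ w⟩
    · exact ⟨hdomH ν h, hnormH ν h⟩
  have hanti : ∀ a b : JJ N, a ≠ b → a.1 = b.1 → rename (Equiv.swap a b) U = - U := by
    intro a b hab h1
    rw [hU, map_sub, map_mul, hsym a b hab h1, hA, rename_Alt _ a b hab h1, rename_Alt _ a b hab h1]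
    ring
  obtain ⟨ν, hν, hmin⟩ := Finset.exists_min_image U.support
    (fun ν => ∑ a, (a.2.val) * ν a) (Finset.nonempty_iff_ne_empty.2 (by simpa using hU0))
  have hν' : coeff ν U ≠ 0 := by simpa [mem_support_iff] using hν
  have hνBA : BA (fun a => (ν a : ℤ)) := by
    intro a b h1 h2
    by_contra hlt
    push Not at hlt
    have hlt' : ν a < ν b := by exact_mod_cast hlt
    have hab : a ≠ b := fun h => by rw [h] at hlt'; exact lt_irrefl _ hlt'
    have hpos : a.2.val < b.2.val := by
      refine lt_of_le_of_ne h2 fun h => hab ?_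
      obtain ⟨k, i⟩ := a
      obtain ⟨k', j⟩ := b
      simp only at h1
      subst h1
      have : i = j := Fin.ext h
      rw [this]
    set ν' := Finsupp.mapDomain (Equiv.swap a b) ν with hν'd
    have hc : coeff ν' U ≠ 0 := by
      have := coeff_rename_mapDomain (Equiv.swap a b) (Equiv.injective _) U ν
      rw [hanti a b hab h1, coeff_neg] at this
      rw [← neg_ne_zero, this]
      exact hν'
    have hle := hmin ν' (by simpa [mem_support_iff] using hc)
    have hval : ∀ x, ν' x = ν (Equiv.swap a b x) := by
      intro x
      have := Finsupp.mapDomain_apply (Equiv.injective (Equiv.swap a b)) ν (Equiv.swap a b x)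
      rwa [Equiv.swap_apply_self] at this
    simp only [hval] at hle
    rw [← Finset.add_sum_erase _ _ (Finset.mem_univ a),
      ← Finset.add_sum_erase Finset.univ (fun x => x.2.val * ν (Equiv.swap a b x)) (Finset.mem_univ a),
      ← Finset.add_sum_erase _ _ (show b ∈ Finset.univ.erase a by simp [hab.symm]),
      ← Finset.add_sum_erase (Finset.univ.erase a)
        (fun x => x.2.val * ν (Equiv.swap a b x)) (show b ∈ Finset.univ.erase a by simp [hab.symm])] at hle
    have hrest : ∑ x ∈ (Finset.univ.erase a).erase b, x.2.val * ν (Equiv.swap a b x)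
        = ∑ x ∈ (Finset.univ.erase a).erase b, x.2.val * ν x := by
      refine Finset.sum_congr rfl fun x hx => ?_
      simp only [Finset.mem_erase, Finset.mem_univ, and_true] at hx
      rw [Equiv.swap_apply_of_ne_of_ne hx.2 hx.1]
    rw [hrest, Equiv.swap_apply_left, Equiv.swap_apply_right] at hle
    nlinarith
  obtain ⟨hd, hn⟩ := hUs ν hν'
  have heq := hd.eq_of hνBA hn
  have hνe : ν = Finsupp.equivFunOnFinite.symm (lam + del N) := by
    ext a; simp [heq]
  apply hν'
  rw [hνe, hU, coeff_sub, hcH, coeff_Alt_self (hinj lam hlam), sub_self]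

end Weyl
end GreenII

namespace GreenII

section Tensor
set_option linter.unusedSectionVars false
variable {B : Type} [Fintype B] {n : ℕ}

abbrev TM (B : Type) (n : ℕ) := Matrix (Fin n → B) (Fin n → B) ℂ

noncomputable def tpf (f : Fin n → Matrix B B ℂ) : TM B n :=
  Matrix.of fun b' b => ∏ s, f s (b' s) (b s)

noncomputable def tp (n : ℕ) (g : Matrix B B ℂ) : TM B n := tpf fun _ => g

theorem tpf_mul (f g : Fin n → Matrix B B ℂ) : tpf f * tpf g = tpf (f * g) := by
  ext b' b
  simp only [tpf, Matrix.mul_apply, Matrix.of_apply, Pi.mul_apply]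
  rw [Finset.prod_univ_sum]
  simp only [Fintype.piFinset_univ, Finset.prod_mul_distrib]

theorem tpf_one : tpf (1 : Fin n → Matrix B B ℂ) = 1 := by
  ext b' b
  simp only [tpf, Matrix.of_apply, Pi.one_apply, Matrix.one_apply]
  rw [Finset.prod_ite_zero]
  simp [funext_iff]

theorem tp_mul (g g' : Matrix B B ℂ) : tp n (g * g') = tp n g * tp n g' := by
  rw [tp, tp, tp, tpf_mul]; rfl

theorem tp_one : tp n (1 : Matrix B B ℂ) = 1 := tpf_one

theorem tp_diagonal (x : B → ℂ) :
    tp n (Matrix.diagonal x) = Matrix.diagonal fun b => ∏ s, x (b s) := by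
  ext b' b
  simp only [tp, tpf, Matrix.of_apply, Matrix.diagonal_apply]
  rw [Finset.prod_ite_zero]
  simp [funext_iff]

noncomputable def site (s : Fin n) (A : Matrix B B ℂ) : TM B n := tpf (Pi.mulSingle s A)

theorem site_apply (s : Fin n) (A : Matrix B B ℂ) (b' b : Fin n → B) :
    site s A b' b = if ∀ r, r ≠ s → b' r = b r then A (b' s) (b s) else 0 := by
  simp only [site, tpf, Matrix.of_apply]
  rw [← Finset.mul_prod_erase _ _ (Finset.mem_univ s), Pi.mulSingle_eq_same]
  have : ∏ r ∈ Finset.univ.erase s, (Pi.mulSingle s A : Fin n → Matrix B B ℂ) r (b' r) (b r)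
      = ∏ r ∈ Finset.univ.erase s, if b' r = b r then (1 : ℂ) else 0 := by
    refine Finset.prod_congr rfl fun r hr => ?_
    rw [Pi.mulSingle_eq_of_ne (Finset.ne_of_mem_erase hr), Matrix.one_apply]
  rw [this, Finset.prod_ite_zero]
  simp

theorem site_mul (s : Fin n) (A A' : Matrix B B ℂ) : site s A * site s A' = site s (A * A') := by
  rw [site, site, site, tpf_mul, Pi.mulSingle_mul]

theorem site_one (s : Fin n) : site s (1 : Matrix B B ℂ) = 1 := by
  rw [site, Pi.mulSingle_one, tpf_one]

theorem site_pow (s : Fin n) (A : Matrix B B ℂ) (k : ℕ) : site s A ^ k = site s (A ^ k) := by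
  induction k with
  | zero => simp [site_one]
  | succ k ih => rw [pow_succ, ih, site_mul, pow_succ]

theorem site_comm {s r : Fin n} (h : s ≠ r) (A A' : Matrix B B ℂ) :
    site s A * site r A' = site r A' * site s A := by
  rw [site, site, tpf_mul, tpf_mul]
  congr 1
  funext q
  simp only [Pi.mul_apply]
  by_cases hq : q = s
  · subst hq; simp [Pi.mulSingle_eq_of_ne h]
  · simp [Pi.mulSingle_eq_of_ne hq]

theorem tp_site (s : Fin n) (g A A' : Matrix B B ℂ) (h : g * A = A' * g) :
    tp n g * site s A = site s A' * tp n g := by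
  rw [tp, site, site, tpf_mul, tpf_mul]
  congr 1
  funext r
  simp only [Pi.mul_apply]
  by_cases hr : r = s
  · subst hr; simp [h]
  · simp [Pi.mulSingle_eq_of_ne hr]

noncomputable def lie (n : ℕ) (A : Matrix B B ℂ) : TM B n := ∑ s, site s A

theorem tp_lie (g A A' : Matrix B B ℂ) (h : g * A = A' * g) :
    tp n g * lie n A = lie n A' * tp n g := by
  simp only [lie, Finset.mul_sum, Finset.sum_mul, tp_site _ g A A' h]

theorem lie_add (A A' : Matrix B B ℂ) : lie n (A + A') = lie n A + lie n A' := by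
  simp only [lie, ← Finset.sum_add_distrib]
  refine Finset.sum_congr rfl fun s _ => ?_
  ext b' b
  simp only [site_apply, Matrix.add_apply]
  split_ifs <;> simp

theorem lie_smul (c : ℂ) (A : Matrix B B ℂ) : lie n (c • A) = c • lie n A := by
  simp only [lie, Finset.smul_sum]
  refine Finset.sum_congr rfl fun s _ => ?_
  ext b' b
  simp only [site_apply, Matrix.smul_apply]
  split_ifs <;> simp

noncomputable def lieL (n : ℕ) : Matrix B B ℂ →ₗ[ℂ] TM B n where
  toFun := lie n
  map_add' := lie_add
  map_smul' := lie_smul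

theorem lie_sub (A A' : Matrix B B ℂ) : lie n (A - A') = lie n A - lie n A' :=
  (lieL n).map_sub A A'

theorem lie_zero : lie n (0 : Matrix B B ℂ) = 0 := (lieL n).map_zero

theorem lie_bracket (A A' : Matrix B B ℂ) :
    lie n A * lie n A' - lie n A' * lie n A = lie n (A * A' - A' * A) := by
  rw [lie_sub]
  simp only [lie, Finset.sum_mul_sum]
  rw [Finset.sum_comm (f := fun i j => site i A' * site j A), ← Finset.sum_sub_distrib,
    ← Finset.sum_sub_distrib]
  refine Finset.sum_congr rfl fun s _ => ?_
  rw [← Finset.sum_sub_distrib, Finset.sum_eq_single s]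
  · rw [site_mul, site_mul]
  · intro r _ hr
    rw [site_comm hr, sub_self]
  · simp

theorem lie_diagonal (y : B → ℂ) :
    lie n (Matrix.diagonal y) = Matrix.diagonal fun b => ∑ s, y (b s) := by
  ext b' b
  rw [lie, Matrix.sum_apply]
  simp only [site_apply, Matrix.diagonal_apply]
  by_cases h : b' = b
  · subst h; simp
  · rw [if_neg h]
    refine Finset.sum_eq_zero fun s _ => ?_
    split_ifs with h1 h2
    · exact absurd (funext fun r => by
        by_cases hr : r = s
        · rw [hr, h2]
        · exact h1 r hr) h
    · rfl
    · rfl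

/-- elementary operators -/
noncomputable def EE (n : ℕ) (a b : B) : TM B n := lie n (Matrix.single a b 1)

theorem EE_bracket (a b c d : B) : EE n a b * EE n c d - EE n c d * EE n a b =
    (if b = c then EE n a d else 0) - (if d = a then EE n c b else 0) := by
  rw [EE, EE, lie_bracket, lie_sub]
  congr 1
  · split_ifs with h
    · subst h; simp [EE]
    · rw [Matrix.single_mul_single_of_ne _ _ _ _ h, lie_zero]
  · split_ifs with h
    · subst h; simp [EE]
    · rw [Matrix.single_mul_single_of_ne _ _ _ _ h, lie_zero]

theorem EE_self (a : B) : EE n a a = Matrix.diagonal fun b => ∑ s, if b s = a then (1 : ℂ) else 0 := by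
  rw [EE, ← Matrix.diagonal_single, lie_diagonal]
  simp [Pi.single_apply]

theorem EE_ne {a c : B} {b' b : Fin n → B} (h : EE n a c b' b ≠ 0) :
    ∃ s, b' s = a ∧ b s = c ∧ ∀ r, r ≠ s → b' r = b r := by
  rw [EE, lie, Matrix.sum_apply] at h
  obtain ⟨s, _, hs⟩ := Finset.exists_ne_zero_of_sum_ne_zero h
  rw [site_apply] at hs
  refine ⟨s, ?_⟩
  split_ifs at hs with h1
  · rw [Matrix.single_apply] at hs
    split_ifs at hs with h2
    · exact ⟨h2.1.symm, h2.2.symm, h1⟩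
    · exact absurd rfl hs
  · exact absurd rfl hs

theorem EE_diag (x : B → ℂ) (a c : B) :
    x c • (tp n (Matrix.diagonal x) * EE n a c) = x a • (EE n a c * tp n (Matrix.diagonal x)) := by
  rw [tp_diagonal]
  ext b' b
  simp only [Matrix.smul_apply, Matrix.diagonal_mul, Matrix.mul_diagonal, smul_eq_mul]
  by_cases h : EE n a c b' b = 0
  · rw [h]; ring
  obtain ⟨s, h1, h2, h3⟩ := EE_ne h
  rw [← Finset.mul_prod_erase _ _ (Finset.mem_univ s),
    ← Finset.mul_prod_erase _ (fun r => x (b r)) (Finset.mem_univ s), h1, h2,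
    Finset.prod_congr rfl fun r hr => by rw [h3 r (Finset.ne_of_mem_erase hr)]]
  ring

/-- Newton identities -/
noncomputable def newtonHom (g : Matrix B B ℂ) :
    Multiplicative (Fin n →₀ ℕ) →* TM B n where
  toFun m := tpf fun s => g ^ (Multiplicative.toAdd m s)
  map_one' := by
    simp only [toAdd_one, Finsupp.coe_zero, Pi.zero_apply, pow_zero]; exact tpf_one
  map_mul' a b := by
    rw [tpf_mul]
    congr 1
    funext s
    simp [pow_add]

open MvPolynomial in
theorem newton (g : Matrix B B ℂ) (S : Submodule ℂ ((Fin n → B) → ℂ))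
    (h : ∀ k, ∀ u ∈ S, (lie n (g ^ k)).mulVec u ∈ S) :
    ∀ u ∈ S, (tp n g).mulVec u ∈ S := by
  let φ : MvPolynomial (Fin n) ℂ →ₐ[ℂ] TM B n :=
    AddMonoidAlgebra.lift ℂ _ (Fin n →₀ ℕ) (newtonHom g)
  have hmon : ∀ m : Fin n →₀ ℕ, φ (monomial m 1) = tpf fun s => g ^ m s := by
    intro m
    have : φ (monomial m 1) = (1 : ℂ) • newtonHom g (Multiplicative.ofAdd m) :=
      AddMonoidAlgebra.lift_single _ _ _
    rw [this, one_smul]; rfl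
  have hX : ∀ s, φ (X s) = site s g := by
    intro s
    rw [X, hmon, site]
    congr 1
    funext r
    by_cases hr : r = s
    · subst hr; simp
    · rw [Pi.mulSingle_eq_of_ne hr, Finsupp.single_eq_of_ne hr, pow_zero]
  have hp : ∀ k, φ (psum (Fin n) ℂ k) = lie n (g ^ k) := by
    intro k
    simp only [psum, map_sum, map_pow, hX, site_pow]; rfl
  have he : φ (esymm (Fin n) ℂ n) = tp n g := by
    have h1 : esymm (Fin n) ℂ n = monomial (Finsupp.equivFunOnFinite.symm fun _ => 1) 1 := by
      rw [esymm]
      have : Finset.powersetCard n (Finset.univ : Finset (Fin n)) = {Finset.univ} := by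
        have h0 := Finset.powersetCard_self (Finset.univ : Finset (Fin n))
        rwa [Finset.card_fin] at h0
      rw [this, Finset.sum_singleton, monomial_eq]
      simp [Finsupp.prod_fintype]
    rw [h1, hmon]
    simp [tp]
  have key : ∀ k, ∀ u ∈ S, (φ (esymm (Fin n) ℂ k)).mulVec u ∈ S := by
    intro k
    induction k using Nat.strong_induction_on with
    | _ k ih =>
      intro u hu
      rcases Nat.eq_zero_or_pos k with rfl | hk
      · simpa [esymm_zero] using hu
      have := congrArg φ (mul_esymm_eq_sum (Fin n) ℂ k)
      rw [map_mul, map_natCast] at this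
      have h2 : (φ (esymm (Fin n) ℂ k)).mulVec u = (k : ℂ)⁻¹ •
          ((k : TM B n) * φ (esymm (Fin n) ℂ k)).mulVec u := by
        rw [← nsmul_eq_mul, ← Nat.cast_smul_eq_nsmul ℂ, Matrix.smul_mulVec, smul_smul,
          inv_mul_cancel₀ (by exact_mod_cast hk.ne'), one_smul]
      rw [h2]
      refine S.smul_mem _ ?_
      rw [this, Finset.mul_sum, map_sum, Matrix.sum_mulVec]
      refine S.sum_mem fun a ha => ?_
      rw [Finset.mem_filter] at ha
      have h3 : (-1 : MvPolynomial (Fin n) ℂ) ^ (k + 1) * ((-1) ^ a.1 * esymm (Fin n) ℂ a.1 *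
          psum (Fin n) ℂ a.2) = ((-1 : ℂ) ^ (k + 1) * (-1) ^ a.1) • (esymm (Fin n) ℂ a.1 *
          psum (Fin n) ℂ a.2) := by
        rw [smul_eq_C_mul]; simp; ring
      rw [h3, map_smul, map_mul, hp, Matrix.smul_mulVec, ← Matrix.mulVec_mulVec]
      exact S.smul_mem _ (ih a.1 ha.2 _ (h _ _ hu))
  rw [← he]
  exact key n

/-- derivative of `tp (1 + t A)` at zero, in functional form -/
theorem tp_deriv (A : Matrix B B ℂ) (S : Submodule ℂ ((Fin n → B) → ℂ)) (u : (Fin n → B) → ℂ)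
    (h : ∀ t : ℂ, (tp n (1 + t • A)).mulVec u ∈ S) : (lie n A).mulVec u ∈ S := by
  by_contra hcon
  obtain ⟨f, hf, hfS⟩ := Submodule.exists_le_ker_of_notMem hcon
  let P : Polynomial ℂ := ∑ b', ∑ b, Polynomial.C (f (Pi.single b' 1) * u b) *
    ∏ s, (Polynomial.C ((1 : Matrix B B ℂ) (b' s) (b s)) +
      Polynomial.X * Polynomial.C (A (b' s) (b s)))
  have hfx : ∀ M : TM B n, f (M.mulVec u) = ∑ b', ∑ b, f (Pi.single b' 1) * u b * M b' b := by
    intro M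
    have e : M.mulVec u = ∑ b', (M.mulVec u b') • (Pi.single b' 1 : (Fin n → B) → ℂ) := by
      ext c; simp [Finset.sum_apply, Pi.single_apply]
    rw [e, map_sum]
    refine Finset.sum_congr rfl fun b' _ => ?_
    rw [map_smul, smul_eq_mul, Matrix.mulVec, dotProduct, Finset.sum_mul]
    exact Finset.sum_congr rfl fun b _ => by ring
  have hP : P = 0 := by
    apply Polynomial.funext
    intro t
    have h1 := hfS (h t)
    rw [LinearMap.mem_ker, hfx] at h1
    simp only [P, Polynomial.eval_finsetSum, Polynomial.eval_mul, Polynomial.eval_C,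
      Polynomial.eval_prod, Polynomial.eval_add, Polynomial.eval_X, Polynomial.eval_zero]
    rw [← h1]
    simp [tp, tpf]
  have hd : (Polynomial.derivative P).eval 0 = f ((lie n A).mulVec u) := by
    rw [hfx]
    simp only [P, Polynomial.derivative_sum, Polynomial.eval_finsetSum,
      Polynomial.derivative_C_mul, Polynomial.eval_mul, Polynomial.eval_C,
      Polynomial.derivative_prod_finset]
    refine Finset.sum_congr rfl fun b' _ => Finset.sum_congr rfl fun b _ => ?_
    congr 1
    rw [lie, Matrix.sum_apply]
    refine Finset.sum_congr rfl fun s _ => ?_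
    rw [site, tpf, Matrix.of_apply, ← Finset.prod_erase_mul _ _ (Finset.mem_univ s)]
    simp only [Polynomial.eval_prod]
    congr 1
    · refine Finset.prod_congr rfl fun r hr => ?_
      rw [Pi.mulSingle_eq_of_ne (Finset.ne_of_mem_erase hr)]
      simp
    · simp
  rw [hP] at hd
  apply hf
  rw [← hd]; simp

end Tensor
end GreenII

namespace GreenII

section HW
set_option linter.unusedSectionVars false
variable {B K : Type} [Fintype B] {n : ℕ}

noncomputable def cnt (b : Fin n → B) (a : B) : ℕ := (Finset.univ.filter fun s => b s = a).card

theorem prod_cnt {M : Type*} [CommMonoid M] (b : Fin n → B) (f : B → M) :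
    ∏ s, f (b s) = ∏ a, f a ^ cnt b a := by
  rw [← Finset.prod_fiberwise' Finset.univ b f]
  simp [cnt]

theorem sum_cnt (b : Fin n → B) (f : B → ℤ) :
    ∑ s, f (b s) = ∑ a, f a * (cnt b a : ℤ) := by
  rw [← Finset.sum_fiberwise' Finset.univ b f]
  refine Finset.sum_congr rfl fun a _ => ?_
  simp [cnt, mul_comm]

theorem EE_self' (a : B) : EE n a a = Matrix.diagonal fun b => (cnt b a : ℂ) := by
  rw [EE_self]
  congr 1
  funext b
  simp [cnt]

/-- block-antitone -/
def BAnt (blk : B → K) (pos : B → ℕ) (y : B → ℤ) : Prop :=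
  ∀ a c, blk a = blk c → pos a ≤ pos c → y c ≤ y a

structure HWd (blk : B → K) (pos : B → ℕ) (lam : B → ℕ) (v : (Fin n → B) → ℂ) : Prop where
  inj : ∀ a c, blk a = blk c → pos a = pos c → a = c
  v0 : v ≠ 0
  up : ∀ a c, blk a = blk c → pos a < pos c → (EE n a c).mulVec v = 0
  wt : ∀ b, v b ≠ 0 → cnt b = lam

inductive Reach (blk : B → K) (pos : B → ℕ) (v : (Fin n → B) → ℂ) : ((Fin n → B) → ℂ) → Prop
  | base : Reach blk pos v v
  | step (u : (Fin n → B) → ℂ) (a c : B) (h : Reach blk pos v u) (h1 : blk a = blk c)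
      (h2 : pos c < pos a) : Reach blk pos v ((EE n a c).mulVec u)

def SS (blk : B → K) (pos : B → ℕ) (v : (Fin n → B) → ℂ) : Submodule ℂ ((Fin n → B) → ℂ) :=
  Submodule.span ℂ {u | Reach blk pos v u}

variable {blk : B → K} {pos : B → ℕ} {lam : B → ℕ} {v : (Fin n → B) → ℂ}

theorem mulVec_span (M : TM B n) (s : Set ((Fin n → B) → ℂ)) (S : Submodule ℂ ((Fin n → B) → ℂ))
    (h : ∀ u ∈ s, M.mulVec u ∈ S) : ∀ u ∈ Submodule.span ℂ s, M.mulVec u ∈ S := by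
  intro u hu
  have : Submodule.span ℂ s ≤ S.comap (Matrix.mulVecLin M) := Submodule.span_le.2 h
  exact this hu

theorem SS_low (a c : B) (h1 : blk a = blk c) (h2 : pos c < pos a) :
    ∀ u ∈ SS blk pos v, (EE n a c).mulVec u ∈ SS blk pos v :=
  mulVec_span _ _ _ fun u hu => Submodule.subset_span (Reach.step u a c hu h1 h2)

theorem HWd.Reach_EE (H : HWd blk pos lam v) {u : (Fin n → B) → ℂ} (hu : Reach blk pos v u) :
    ∀ a c, blk a = blk c → (EE n a c).mulVec u ∈ SS blk pos v := by
  induction hu with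
  | base =>
    intro a c h
    rcases lt_trichotomy (pos a) (pos c) with h1 | h1 | h1
    · rw [H.up a c h h1]; exact Submodule.zero_mem _
    · have := H.inj a c h h1
      subst this
      have : (EE n a a).mulVec v = (lam a : ℂ) • v := by
        rw [EE_self']
        ext b
        rw [Matrix.mulVec_diagonal, Pi.smul_apply, smul_eq_mul]
        by_cases hb : v b = 0
        · rw [hb]; ring
        · rw [H.wt b hb]
      rw [this]
      exact Submodule.smul_mem _ _ (Submodule.subset_span Reach.base)
    · exact Submodule.subset_span (Reach.step v a c Reach.base h h1)
  | step u a c hu h1 h2 ih =>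
    intro a' c' h'
    have hb := EE_bracket (n := n) a' c' a c
    have e : (EE n a' c').mulVec ((EE n a c).mulVec u) = (EE n a c).mulVec ((EE n a' c').mulVec u)
        + (((if c' = a then EE n a' c else 0) - (if c = a' then EE n a c' else 0) : TM B n)).mulVec u := by
      rw [← hb, Matrix.sub_mulVec, Matrix.mulVec_mulVec, Matrix.mulVec_mulVec]
      abel
    rw [e]
    refine Submodule.add_mem _ (SS_low a c h1 h2 _ (ih a' c' h')) ?_
    rw [Matrix.sub_mulVec]
    refine Submodule.sub_mem _ ?_ ?_
    · split_ifs with hh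
      · subst hh; exact ih _ _ (h'.trans h1)
      · simp
    · split_ifs with hh
      · subst hh; exact ih _ _ (h1.trans h')
      · simp

theorem HWd.SS_EE (H : HWd blk pos lam v) (a c : B) (h : blk a = blk c) :
    ∀ u ∈ SS blk pos v, (EE n a c).mulVec u ∈ SS blk pos v :=
  mulVec_span _ _ _ fun _ hu => H.Reach_EE hu a c h

def BDiag (blk : B → K) (g : Matrix B B ℂ) : Prop := ∀ a c, blk a ≠ blk c → g a c = 0

theorem BDiag.mul {g g' : Matrix B B ℂ} (h : BDiag blk g) (h' : BDiag blk g') :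
    BDiag blk (g * g') := by
  intro a c hac
  rw [Matrix.mul_apply]
  refine Finset.sum_eq_zero fun b _ => ?_
  by_cases hb : blk a = blk b
  · rw [h' b c (hb ▸ hac), mul_zero]
  · rw [h a b hb, zero_mul]

theorem BDiag.one : BDiag blk (1 : Matrix B B ℂ) := by
  intro a c hac
  rw [Matrix.one_apply_ne]
  rintro rfl; exact hac rfl

theorem BDiag.pow {g : Matrix B B ℂ} (h : BDiag blk g) (k : ℕ) : BDiag blk (g ^ k) := by
  induction k with
  | zero => rw [pow_zero]; exact BDiag.one
  | succ k ih => rw [pow_succ]; exact ih.mul h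

theorem HWd.SS_lie (H : HWd blk pos lam v) (g : Matrix B B ℂ) (hg : BDiag blk g) :
    ∀ u ∈ SS blk pos v, (lie n g).mulVec u ∈ SS blk pos v := by
  intro u hu
  have : lie n g = ∑ a, ∑ c, g a c • EE n a c := by
    conv_lhs => rw [Matrix.matrix_eq_sum_single g]
    change lieL n _ = _
    simp only [map_sum]
    refine Finset.sum_congr rfl fun a _ => Finset.sum_congr rfl fun c _ => ?_
    rw [EE, ← lie_smul]
    simp [lieL]
  rw [this, Matrix.sum_mulVec]
  refine Submodule.sum_mem _ fun a _ => ?_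
  rw [Matrix.sum_mulVec]
  refine Submodule.sum_mem _ fun c _ => ?_
  by_cases h : blk a = blk c
  · rw [Matrix.smul_mulVec]
    exact Submodule.smul_mem _ _ (H.SS_EE a c h u hu)
  · rw [hg a c h, zero_smul, Matrix.zero_mulVec]; exact Submodule.zero_mem _

theorem HWd.SS_tp (H : HWd blk pos lam v) (g : Matrix B B ℂ) (hg : BDiag blk g) :
    ∀ u ∈ SS blk pos v, (tp n g).mulVec u ∈ SS blk pos v :=
  newton g _ fun k => H.SS_lie (g ^ k) (hg.pow k)

/-- The group-span equals `SS`. -/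
theorem HWd.span_eq (H : HWd blk pos lam v) :
    Submodule.span ℂ {u | ∃ g : Matrix B B ℂ, BDiag blk g ∧ IsUnit g ∧ u = (tp n g).mulVec v}
      = SS blk pos v := by
  apply le_antisymm
  · rw [Submodule.span_le]
    rintro u ⟨g, hg, -, rfl⟩
    exact H.SS_tp g hg v (Submodule.subset_span Reach.base)
  · rw [SS, Submodule.span_le]
    intro u hu
    induction hu with
    | base => exact Submodule.subset_span ⟨1, BDiag.one, isUnit_one, by rw [tp_one, Matrix.one_mulVec]⟩
    | step u a c hu h1 h2 ih =>
      refine tp_deriv _ _ u fun t => ?_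
      have hac : a ≠ c := by rintro rfl; exact lt_irrefl _ h2
      have hsq : Matrix.single a c (1 : ℂ) * Matrix.single a c 1 = 0 :=
        Matrix.single_mul_single_of_ne _ _ _ _ hac.symm _
      have hunit : IsUnit (1 + t • Matrix.single a c (1 : ℂ)) := by
        refine isUnit_iff_exists.2 ⟨1 - t • Matrix.single a c (1 : ℂ), ?_, ?_⟩
        · rw [mul_sub, add_mul, add_mul, smul_mul_smul_comm, hsq]; simp
        · rw [mul_add, sub_mul, sub_mul, smul_mul_smul_comm, hsq]; simp
      have hbd : BDiag blk (1 + t • Matrix.single a c (1 : ℂ)) := by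
        intro a' c' h'
        rw [Matrix.add_apply, BDiag.one a' c' h', Matrix.smul_apply, Matrix.single_apply_of_ne]
        · simp
        · rintro ⟨rfl, rfl⟩; exact h' h1
      refine mulVec_span _ _ _ ?_ _ ih
      rintro w ⟨g, hg, hgu, rfl⟩
      refine Submodule.subset_span ⟨_, hbd.mul hg, hunit.mul hgu, ?_⟩
      rw [tp_mul, Matrix.mulVec_mulVec]

/-! weights -/

theorem EE_support {u : (Fin n → B) → ℂ} {om : (B → ℤ) → ℤ} {a c : B}
    (hu : ∀ b, u b ≠ 0 → ∀ y : B → ℤ, ∑ s, y (b s) = om y) :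
    ∀ b, (EE n a c).mulVec u b ≠ 0 → ∀ y : B → ℤ, ∑ s, y (b s) = om y + y a - y c := by
  intro b' hb' y
  obtain ⟨b, _, hb⟩ := Finset.exists_ne_zero_of_sum_ne_zero hb'
  obtain ⟨s, h1, h2, h3⟩ := EE_ne (left_ne_zero_of_mul hb)
  rw [← hu b (right_ne_zero_of_mul hb) y, ← Finset.add_sum_erase _ _ (Finset.mem_univ s),
    ← Finset.add_sum_erase _ (fun r => y (b r)) (Finset.mem_univ s), h1, h2,
    Finset.sum_congr rfl fun r hr => by rw [h3 r (Finset.ne_of_mem_erase hr)]]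
  ring

theorem cnt_eq_of {b b' : Fin n → B} (h : ∀ y : B → ℤ, ∑ s, y (b s) = ∑ s, y (b' s)) :
    cnt b = cnt b' := by
  funext a
  have := h (Pi.single a 1)
  rw [sum_cnt, sum_cnt] at this
  simp only [Pi.single_apply, ite_mul, one_mul, zero_mul, Finset.sum_ite_eq', Finset.mem_univ,
    if_true] at this
  exact_mod_cast this

theorem HWd.wt_om (H : HWd blk pos lam v) (b : Fin n → B) (hb : v b ≠ 0) (y : B → ℤ) :
    ∑ s, y (b s) = ∑ a, y a * (lam a : ℤ) := by
  rw [sum_cnt, H.wt b hb]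

theorem HWd.Reach_wt (H : HWd blk pos lam v) {u : (Fin n → B) → ℂ} (hu : Reach blk pos v u) :
    ∃ om : (B → ℤ) → ℤ, (∀ b, u b ≠ 0 → ∀ y : B → ℤ, ∑ s, y (b s) = om y) ∧
      (∀ y, BAnt blk pos y → om y ≤ ∑ a, y a * (lam a : ℤ)) ∧
      (u = v ∨ ∑ a, (pos a : ℤ) * (lam a : ℤ) < om (fun a => (pos a : ℤ))) := by
  induction hu with
  | base => exact ⟨_, H.wt_om, fun y _ => le_rfl, Or.inl rfl⟩
  | step u a c hu h1 h2 ih =>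
    obtain ⟨om, i1, i2, i3⟩ := ih
    refine ⟨_, EE_support i1, ?_, ?_⟩
    · intro y hy
      have := i2 y hy
      have := hy c a h1.symm h2.le
      linarith
    · right
      have h2' : (pos c : ℤ) < pos a := by exact_mod_cast h2
      rcases i3 with rfl | i3
      · -- the weight of `v`
        obtain ⟨b, hb⟩ := Function.ne_iff.1 H.v0
        have := i1 b hb (fun a => (pos a : ℤ))
        have h5 := H.wt_om b hb (fun a => (pos a : ℤ))
        simp only at this h5 ⊢
        linarith
      · linarith

noncomputable def PP (mu : B → ℕ) : TM B n := Matrix.diagonal fun b => if cnt b = mu then 1 else 0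

theorem PP_mulVec (mu : B → ℕ) (u : (Fin n → B) → ℂ) (b : Fin n → B) :
    (PP mu : TM B n).mulVec u b = if cnt b = mu then u b else 0 := by
  rw [PP, Matrix.mulVec_diagonal]; split_ifs <;> simp

theorem PP_wt {u : (Fin n → B) → ℂ} {om : (B → ℤ) → ℤ}
    (hu : ∀ b, u b ≠ 0 → ∀ y : B → ℤ, ∑ s, y (b s) = om y) (mu : B → ℕ) :
    (PP mu : TM B n).mulVec u = 0 ∨ ((PP mu : TM B n).mulVec u = u ∧ ∃ b, u b ≠ 0 ∧ cnt b = mu) := by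
  by_cases h : ∃ b, u b ≠ 0 ∧ cnt b = mu
  · right
    obtain ⟨b0, h1, h2⟩ := h
    refine ⟨?_, b0, h1, h2⟩
    funext b
    rw [PP_mulVec]
    split_ifs with hb
    · rfl
    · by_contra hne
      apply hb
      rw [← h2]
      exact cnt_eq_of fun y => by rw [hu b (Ne.symm hne), hu b0 h1]
  · left
    funext b
    rw [PP_mulVec]
    split_ifs with hb
    · by_contra hne
      exact h ⟨b, hne, hb⟩
    · rfl

theorem HWd.SS_PP (H : HWd blk pos lam v) (mu : B → ℕ) :
    ∀ u ∈ SS blk pos v, (PP mu : TM B n).mulVec u ∈ SS blk pos v :=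
  mulVec_span _ _ _ fun u hu => by
    obtain ⟨om, h1, -, -⟩ := H.Reach_wt hu
    rcases PP_wt h1 mu with h | ⟨h, -⟩
    · rw [h]; exact Submodule.zero_mem _
    · rw [h]; exact Submodule.subset_span hu

theorem HWd.SS_PP_dom (H : HWd blk pos lam v) (mu : B → ℕ) {u : (Fin n → B) → ℂ}
    (hu : u ∈ SS blk pos v) (hne : (PP mu : TM B n).mulVec u ≠ 0) (y : B → ℤ)
    (hy : BAnt blk pos y) : ∑ a, y a * (mu a : ℤ) ≤ ∑ a, y a * (lam a : ℤ) := by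
  by_contra hcon
  apply hne
  have := mulVec_span (PP mu : TM B n) {u | Reach blk pos v u} ⊥ (fun u hu => by
    obtain ⟨om, h1, h2, -⟩ := H.Reach_wt hu
    rcases PP_wt h1 mu with h | ⟨h, b, hb, rfl⟩
    · rw [h]; exact Submodule.zero_mem _
    · exfalso
      apply hcon
      rw [← sum_cnt, h1 b hb]
      exact h2 y hy) u hu
  simpa using this

theorem HWd.SS_PP_lam (H : HWd blk pos lam v) :
    ∀ u ∈ SS blk pos v, (PP lam : TM B n).mulVec u ∈ Submodule.span ℂ {v} :=
  mulVec_span _ _ _ fun u hu => by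
    obtain ⟨om, h1, -, h3⟩ := H.Reach_wt hu
    rcases PP_wt h1 lam with h | ⟨h, b, hb, hb2⟩
    · rw [h]; exact Submodule.zero_mem _
    · rcases h3 with rfl | h3
      · rw [h]; exact Submodule.mem_span_singleton_self _
      · exfalso
        rw [← h1 b hb, sum_cnt b (fun a => (pos a : ℤ)), hb2] at h3
        exact lt_irrefl _ h3

theorem HWd.PP_v (H : HWd blk pos lam v) : (PP lam : TM B n).mulVec v = v := by
  funext b
  rw [PP_mulVec]
  split_ifs with h
  · rfl
  · by_contra hne; exact h (H.wt b (Ne.symm hne))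

/-! Casimir -/

noncomputable def Cas (n : ℕ) (blk : B → K) (R : K → Prop) : TM B n :=
  ∑ a, ∑ c, if blk a = blk c ∧ R (blk a) then EE n a c * EE n c a else 0

theorem Cas_comm (R : K → Prop) (c d : B) (h : blk c = blk d) :
    Cas n blk R * EE n c d = EE n c d * Cas n blk R := by
  rw [← sub_eq_zero]
  have key : ∀ a b : B, (EE n a b * EE n b a) * EE n c d - EE n c d * (EE n a b * EE n b a)
      = EE n a b * ((if a = c then EE n b d else 0) - (if d = b then EE n c a else 0))
        + ((if b = c then EE n a d else 0) - (if d = a then EE n c b else 0)) * EE n b a := by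
    intro a b
    rw [← EE_bracket, ← EE_bracket]
    noncomm_ring
  have e : Cas n blk R * EE n c d - EE n c d * Cas n blk R = ∑ a, ∑ b,
      if blk a = blk b ∧ R (blk a) then
      EE n a b * ((if a = c then EE n b d else 0) - (if d = b then EE n c a else 0))
        + ((if b = c then EE n a d else 0) - (if d = a then EE n c b else 0)) * EE n b a else 0 := by
    simp only [Cas, Finset.sum_mul, Finset.mul_sum, ← Finset.sum_sub_distrib]
    refine Finset.sum_congr rfl fun a _ => Finset.sum_congr rfl fun b _ => ?_
    by_cases hh : blk a = blk b ∧ R (blk a)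
    · rw [if_pos hh, if_pos hh]
      exact key a b
    · rw [if_neg hh, if_neg hh]; simp
  rw [e]
  have e2 : ∀ a b : B, (if blk a = blk b ∧ R (blk a) then
      EE n a b * ((if a = c then EE n b d else 0) - (if d = b then EE n c a else 0))
        + ((if b = c then EE n a d else 0) - (if d = a then EE n c b else 0)) * EE n b a else 0)
      = (if a = c then (if blk c = blk b ∧ R (blk c) then EE n c b * EE n b d else 0) else 0)
        - (if b = d then (if blk c = blk a ∧ R (blk c) then EE n a d * EE n c a else 0) else 0)
        + (if b = c then (if blk c = blk a ∧ R (blk c) then EE n a d * EE n c a else 0) else 0)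
        - (if a = d then (if blk c = blk b ∧ R (blk c) then EE n c b * EE n b d else 0) else 0) := by
    intro a b
    by_cases h1 : blk a = blk b ∧ R (blk a)
    · rw [if_pos h1, mul_sub, sub_mul]
      have t1 : ∀ x y : TM B n, x - y = x + -y := sub_eq_add_neg
      have p1 : EE n a b * (if a = c then EE n b d else 0) = (if a = c then (if blk c = blk b ∧ R (blk c) then EE n c b * EE n b d else 0) else 0) := by
        split_ifs with q1 q2
        · subst q1; rfl
        · subst q1; exact absurd h1 q2
        · simp
      have p2 : EE n a b * (if d = b then EE n c a else 0) = (if b = d then (if blk c = blk a ∧ R (blk c) then EE n a d * EE n c a else 0) else 0) := by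
        by_cases q1 : b = d
        · subst q1; rw [if_pos rfl, if_pos rfl, if_pos]
          exact ⟨h.trans h1.1.symm, by rw [h, ← h1.1]; exact h1.2⟩
        · rw [if_neg q1, if_neg (Ne.symm q1), mul_zero]
      have p3 : (if b = c then EE n a d else 0) * EE n b a = (if b = c then (if blk c = blk a ∧ R (blk c) then EE n a d * EE n c a else 0) else 0) := by
        by_cases q1 : b = c
        · subst q1; rw [if_pos rfl, if_pos rfl, if_pos]
          exact ⟨h1.1.symm, by rw [← h1.1]; exact h1.2⟩
        · rw [if_neg q1, if_neg q1, zero_mul]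
      have p4 : (if d = a then EE n c b else 0) * EE n b a = (if a = d then (if blk c = blk b ∧ R (blk c) then EE n c b * EE n b d else 0) else 0) := by
        by_cases q1 : a = d
        · subst q1; rw [if_pos rfl, if_pos rfl, if_pos]
          exact ⟨h.trans h1.1, by rw [h]; exact h1.2⟩
        · rw [if_neg q1, if_neg (Ne.symm q1), zero_mul]
      rw [p1, p2, p3, p4]
      abel
    · rw [if_neg h1]
      have p1 : (if a = c then (if blk c = blk b ∧ R (blk c) then EE n c b * EE n b d else 0) else 0) = 0 := by
        split_ifs with q1 q2
        · subst q1; exact absurd q2 h1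
        · rfl
        · rfl
      have p2 : (if b = d then (if blk c = blk a ∧ R (blk c) then EE n a d * EE n c a else 0) else 0) = 0 := by
        split_ifs with q1 q2
        · subst q1; exact absurd ⟨q2.1.symm.trans h, q2.1 ▸ q2.2⟩ h1
        · rfl
        · rfl
      have p3 : (if b = c then (if blk c = blk a ∧ R (blk c) then EE n a d * EE n c a else 0) else 0) = 0 := by
        split_ifs with q1 q2
        · subst q1; exact absurd ⟨q2.1.symm, q2.1 ▸ q2.2⟩ h1
        · rfl
        · rfl
      have p4 : (if a = d then (if blk c = blk b ∧ R (blk c) then EE n c b * EE n b d else 0) else 0) = 0 := by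
        split_ifs with q1 q2
        · subst q1; exact absurd ⟨h.symm.trans q2.1, h ▸ q2.2⟩ h1
        · rfl
        · rfl
      rw [p1, p2, p3, p4]; simp
  simp only [e2, Finset.sum_add_distrib, Finset.sum_sub_distrib]
  have s1 : ∀ f : B → TM B n, ∀ x : B, ∑ a : B, ∑ b : B, (if a = x then f b else 0) = ∑ b, f b := by
    intro f x
    rw [Finset.sum_eq_single x]
    · simp
    · intro a _ ha; simp [ha]
    · simp
  have s2 : ∀ f : B → TM B n, ∀ x : B, ∑ a : B, ∑ b : B, (if b = x then f a else 0) = ∑ b, f b := by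
    intro f x
    refine Finset.sum_congr rfl fun a _ => ?_
    simp
  rw [s1 (fun b => if blk c = blk b ∧ R (blk c) then EE n c b * EE n b d else 0),
    s1 (fun b => if blk c = blk b ∧ R (blk c) then EE n c b * EE n b d else 0),
    s2 (fun a => if blk c = blk a ∧ R (blk c) then EE n a d * EE n c a else 0),
    s2 (fun a => if blk c = blk a ∧ R (blk c) then EE n a d * EE n c a else 0)]
  abel

theorem HWd.Cas_scalar (H : HWd blk pos lam v) (R : K → Prop) :
    ∃ z : ℂ, ∀ u ∈ SS blk pos v, (Cas n blk R).mulVec u = z • u := by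
  have hv : v ∈ SS blk pos v := Submodule.subset_span Reach.base
  have h1 : (Cas n blk R).mulVec v ∈ SS blk pos v := by
    rw [Cas, Matrix.sum_mulVec]
    refine Submodule.sum_mem _ fun a _ => ?_
    rw [Matrix.sum_mulVec]
    refine Submodule.sum_mem _ fun c _ => ?_
    split_ifs with h
    · rw [← Matrix.mulVec_mulVec]
      exact H.SS_EE a c h.1 _ (H.SS_EE c a h.1.symm _ hv)
    · simp
  have h2 : (PP lam : TM B n).mulVec ((Cas n blk R).mulVec v) = (Cas n blk R).mulVec v := by
    rw [Cas, Matrix.sum_mulVec, Matrix.mulVec_sum]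
    refine Finset.sum_congr rfl fun a _ => ?_
    rw [Matrix.sum_mulVec, Matrix.mulVec_sum]
    refine Finset.sum_congr rfl fun c _ => ?_
    split_ifs with h
    · rw [← Matrix.mulVec_mulVec]
      have hs := EE_support (a := a) (c := c) (EE_support (a := c) (c := a) H.wt_om)
      funext b
      rw [PP_mulVec]
      split_ifs with hb
      · rfl
      · by_contra hne
        obtain ⟨b0, hb0⟩ := Function.ne_iff.1 H.v0
        apply hb
        rw [← H.wt b0 hb0]
        exact cnt_eq_of fun y => by
          rw [hs b (Ne.symm hne), H.wt_om b0 hb0]; ring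
    · simp
  have h3 := H.SS_PP_lam _ h1
  rw [h2] at h3
  obtain ⟨z, hz⟩ := Submodule.mem_span_singleton.1 h3
  refine ⟨z, ?_⟩
  have : ∀ u, Reach blk pos v u → (Cas n blk R).mulVec u = z • u := by
    intro u hu
    induction hu with
    | base => exact hz.symm
    | step u a c hu k1 k2 ih =>
      rw [Matrix.mulVec_mulVec, Cas_comm R a c k1, ← Matrix.mulVec_mulVec, ih, Matrix.mulVec_smul]
  intro u hu
  have h5 := mulVec_span (Cas n blk R - z • 1) {u | Reach blk pos v u} ⊥ (fun u hu => by
    rw [Matrix.sub_mulVec, this u hu, Matrix.smul_mulVec, Matrix.one_mulVec, sub_self]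
    exact Submodule.zero_mem _) u hu
  rw [Submodule.mem_bot, Matrix.sub_mulVec, Matrix.smul_mulVec, Matrix.one_mulVec, sub_eq_zero] at h5
  exact h5

end HW
end GreenII

namespace GreenII

section Tr
set_option linter.unusedSectionVars false
variable {T : Type} [Fintype T]

def Pres (P A : Matrix T T ℂ) : Prop := P * (A * P) = A * P

noncomputable def psi (P A : Matrix T T ℂ) : ℂ := Matrix.trace (A * P)

theorem Pres.mul {P A A' : Matrix T T ℂ} (h : Pres P A) (h' : Pres P A') : Pres P (A * A') := by
  unfold Pres at *
  calc P * (A * A' * P) = P * (A * (A' * P)) := by rw [mul_assoc]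
    _ = P * (A * (P * (A' * P))) := by rw [h']
    _ = (P * (A * P)) * (A' * P) := by noncomm_ring
    _ = (A * P) * (A' * P) := by rw [h]
    _ = A * (P * (A' * P)) := by noncomm_ring
    _ = A * A' * P := by rw [h', mul_assoc]

theorem Pres.add {P A A' : Matrix T T ℂ} (h : Pres P A) (h' : Pres P A') : Pres P (A + A') := by
  unfold Pres at *
  rw [add_mul, mul_add, h, h']

theorem psi_comm {P A A' : Matrix T T ℂ} (h : Pres P A) (h' : Pres P A') :
    psi P (A * A') = psi P (A' * A) := by
  unfold Pres at *
  unfold psi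
  calc Matrix.trace (A * A' * P) = Matrix.trace (A * (A' * P)) := by rw [mul_assoc]
    _ = Matrix.trace (A * (P * (A' * P))) := by rw [h']
    _ = Matrix.trace ((A * P) * (A' * P)) := by rw [mul_assoc A P]
    _ = Matrix.trace ((A' * P) * (A * P)) := Matrix.trace_mul_comm _ _
    _ = Matrix.trace (A' * (P * (A * P))) := by rw [mul_assoc A' P]
    _ = Matrix.trace (A' * A * P) := by rw [h, mul_assoc]

theorem psi_add (P A A' : Matrix T T ℂ) : psi P (A + A') = psi P A + psi P A' := by
  simp [psi, add_mul]

theorem psi_sub (P A A' : Matrix T T ℂ) : psi P (A - A') = psi P A - psi P A' := by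
  simp [psi, sub_mul]

theorem psi_smul (P A : Matrix T T ℂ) (c : ℂ) : psi P (c • A) = c * psi P A := by
  simp [psi]

structure IsProjOn (S : Submodule ℂ (T → ℂ)) (P : Matrix T T ℂ) : Prop where
  mem : ∀ u, P.mulVec u ∈ S
  fix : ∀ u ∈ S, P.mulVec u = u

theorem exists_proj (S : Submodule ℂ (T → ℂ)) : ∃ P : Matrix T T ℂ, IsProjOn S P := by
  obtain ⟨S', hS'⟩ := Submodule.exists_isCompl S
  let f : (T → ℂ) →ₗ[ℂ] (T → ℂ) := S.subtype ∘ₗ S.projectionOnto S' hS'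
  refine ⟨LinearMap.toMatrix' f, ?_, ?_⟩
  · intro u
    rw [LinearMap.toMatrix'_mulVec]
    exact Submodule.coe_mem _
  · intro u hu
    rw [LinearMap.toMatrix'_mulVec]
    exact congrArg Subtype.val (Submodule.projectionOnto_apply_left hS' ⟨u, hu⟩)

theorem IsProjOn.ext_on {S : Submodule ℂ (T → ℂ)} {P A A' : Matrix T T ℂ} (hP : IsProjOn S P)
    (h : ∀ u ∈ S, A.mulVec u = A'.mulVec u) : A * P = A' * P := by
  apply Matrix.ext_of_mulVec_single
  intro i
  rw [← Matrix.mulVec_mulVec, ← Matrix.mulVec_mulVec]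
  exact h _ (hP.mem _)

theorem IsProjOn.pres {S : Submodule ℂ (T → ℂ)} {P A : Matrix T T ℂ} (hP : IsProjOn S P)
    (h : ∀ u ∈ S, A.mulVec u ∈ S) : Pres P A := by
  unfold Pres
  rw [← mul_assoc]
  apply hP.ext_on
  intro u hu
  rw [← Matrix.mulVec_mulVec, hP.fix _ (h u hu)]

theorem IsProjOn.traceOn {S : Submodule ℂ (T → ℂ)} {P A : Matrix T T ℂ} (hP : IsProjOn S P)
    (h : ∀ u ∈ S, A.mulVec u ∈ S) : GreenII.traceOn S (Matrix.mulVecLin A) = psi P A := by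
  have h' : ∀ u ∈ S, Matrix.mulVecLin A u ∈ S := h
  rw [GreenII.traceOn, dif_pos h']
  have hf : ∀ u, Matrix.mulVecLin (A * P) u ∈ S := by
    intro u
    rw [Matrix.mulVecLin_apply, ← Matrix.mulVec_mulVec]
    exact h _ (hP.mem u)
  have e : (Matrix.mulVecLin A).restrict h' = (Matrix.mulVecLin (A * P)).restrict
      (fun u _ => hf u : ∀ u ∈ S, Matrix.mulVecLin (A * P) u ∈ S) := by
    ext1 u
    apply Subtype.ext
    simp only [LinearMap.coe_restrict_apply, Matrix.mulVecLin_apply]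
    rw [← Matrix.mulVec_mulVec, hP.fix _ u.2]
  rw [e, LinearMap.trace_restrict_eq_of_forall_mem S _ hf, psi]
  have : Matrix.mulVecLin (A * P) = Matrix.toLin' (A * P) := rfl
  rw [this, Matrix.trace_toLin'_eq]

theorem loop {P Sg D B' : Matrix T T ℂ} (A : ℕ → Matrix T T ℂ) (h : ℕ) (h0 : 0 < h)
    (pS : Pres P Sg) (pD : Pres P D) (pB : Pres P B') (pA : ∀ i, Pres P (A i))
    (hs : ∀ i, Sg * A i = A (i + 1) * Sg)
    (hD : ∀ i, 0 < i → i < h → D * A i = A i * D)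
    (hB : ∀ i, 0 < i → i < h → A i * B' = B' * A i)
    (hh : A h = A 0) : psi P (D * Sg * A 0 * B') = psi P (D * A 0 * Sg * B') := by
  have key : ∀ i, i < h → psi P (D * Sg * A 0 * B') = psi P (D * Sg * A i * B') := by
    intro i
    induction i with
    | zero => intro _; rfl
    | succ i ih =>
      intro hi
      rw [ih (by omega)]
      calc psi P (D * Sg * A i * B') = psi P (D * (Sg * A i) * B') := by rw [mul_assoc D]
        _ = psi P ((D * A (i + 1)) * (Sg * B')) := by rw [hs]; congr 1; noncomm_ring
        _ = psi P (A (i + 1) * (D * Sg * B')) := by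
          rw [hD _ (by omega) hi]; congr 1; noncomm_ring
        _ = psi P ((D * Sg * B') * A (i + 1)) := psi_comm (pA _) ((pD.mul pS).mul pB)
        _ = psi P (D * Sg * A (i + 1) * B') := by
          rw [mul_assoc (D * Sg), ← hB _ (by omega) hi, mul_assoc (D * Sg)]
  obtain ⟨k, rfl⟩ : ∃ k, h = k + 1 := ⟨h - 1, by omega⟩
  rw [key k (by omega), mul_assoc D Sg, hs, hh]
  congr 1
  noncomm_ring

end Tr

section Perm
set_option linter.unusedSectionVars false
variable {B K : Type} [Fintype B] {n : ℕ}

noncomputable def permM (s : Equiv.Perm B) : Matrix B B ℂ :=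
  Matrix.of fun b' b => if b' = s b then 1 else 0

theorem permM_one : permM (1 : Equiv.Perm B) = 1 := by
  ext b' b
  simp only [permM, Matrix.one_apply, Matrix.of_apply, Equiv.Perm.coe_one, id]
  by_cases h : b' = b <;> simp [h]

theorem permM_mul (s t : Equiv.Perm B) : permM (s * t) = permM s * permM t := by
  ext b' b
  simp only [permM, Matrix.mul_apply, Matrix.of_apply, Equiv.Perm.coe_mul, Function.comp]
  by_cases h : b' = s (t b) <;> simp [h]

theorem tp_permM_apply (s : Equiv.Perm B) (b' b : Fin n → B) :
    tp n (permM s) b' b = if b' = s ∘ b then 1 else 0 := by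
  simp only [tp, tpf, permM, Matrix.of_apply]
  rw [Finset.prod_ite_zero]
  simp [funext_iff]

theorem permM_single (s : Equiv.Perm B) (a c : B) :
    permM s * Matrix.single a c 1 = Matrix.single (s a) (s c) 1 * permM s := by
  ext b' b
  simp only [permM, Matrix.mul_apply, Matrix.of_apply, Matrix.single_apply]
  rw [Finset.sum_eq_single a, Finset.sum_eq_single (s c)]
  · by_cases h1 : b' = s a <;> by_cases h2 : c = b <;> simp [h1, h2, eq_comm]
  · intro x _ hx; simp [hx.symm]
  · simp
  · intro x _ hx; simp [hx.symm]
  · simp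

theorem permM_diagonal (s : Equiv.Perm B) (z : B → ℂ) :
    Matrix.diagonal z * permM s = permM s * Matrix.diagonal (z ∘ s) := by
  ext b' b
  simp only [permM, Matrix.diagonal_mul, Matrix.mul_diagonal, Matrix.of_apply, Function.comp]
  split_ifs with h
  · rw [h]; ring
  · ring

theorem Sg_EE (s : Equiv.Perm B) (a c : B) :
    tp n (permM s) * EE n a c = EE n (s a) (s c) * tp n (permM s) :=
  tp_lie _ _ _ (permM_single s a c)

theorem Sg_D (s : Equiv.Perm B) (z : B → ℂ) :
    tp n (Matrix.diagonal z) * tp n (permM s) = tp n (permM s) * tp n (Matrix.diagonal (z ∘ s)) := by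
  rw [← tp_mul, ← tp_mul, permM_diagonal]

theorem D_mul (x z : B → ℂ) :
    tp n (Matrix.diagonal x) * tp n (Matrix.diagonal z) = tp n (Matrix.diagonal (x * z)) := by
  rw [← tp_mul, Matrix.diagonal_mul_diagonal]; rfl

theorem Sg_W (s t : Equiv.Perm B) :
    tp n (permM s) * tp n (permM t) = tp n (permM (s * t * s⁻¹)) * tp n (permM s) := by
  rw [← tp_mul, ← tp_mul, ← permM_mul, ← permM_mul]; simp

theorem permM_swap_BDiag {blk : B → K} {a c : B} (h : blk a = blk c) :
    BDiag blk (permM (Equiv.swap a c)) := by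
  intro b' b hb
  simp only [permM, Matrix.of_apply]
  rw [if_neg]
  rintro rfl
  apply hb
  rw [Equiv.swap_apply_def]
  split_ifs with h1 h2
  · rw [h1, h]
  · rw [h2, h]
  · rfl

end Perm
end GreenII

namespace GreenII

section Main
set_option linter.unusedSectionVars false
open MvPolynomial
variable {B K : Type} [Fintype B] {κ : Type} [Fintype κ] {N : κ → ℕ} {n : ℕ}

structure Sys (blk : B → K) (pos : B → ℕ) (lam : B → ℕ) (v : (Fin n → B) → ℂ)
    (σ : Equiv.Perm B) (ι : JJ N → B) (h : ℕ) : Prop where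
  H : HWd blk pos lam v
  inj : Function.Injective ι
  blk_iff : ∀ a b, blk (ι a) = blk (ι b) ↔ a.1 = b.1
  pos_eq : ∀ a, pos (ι a) = a.2.val
  rng : ∀ b a, blk b = blk (ι a) → ∃ a', ι a' = b
  spos : ∀ b, pos (σ b) = pos b
  sblk : ∀ a b, blk a = blk b → blk (σ a) = blk (σ b)
  slam : ∀ b, lam (σ b) = lam b
  sv : (tp n (permM σ)).mulVec v = v
  h0 : 0 < h
  sh : σ ^ h = 1
  free : ∀ i, 0 < i → i < h → ∀ a a', (σ ^ i) (ι a) ≠ ι a'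
  cover : ∀ b, ∃ i, i < h ∧ ∃ a, b = (σ ^ i) (ι a)
  lamBA : BA (fun a => (lam (ι a) : ℤ))

noncomputable def ex (ι : JJ N → B) (x : JJ N → ℂ) : B → ℂ := Function.extend ι x 1

noncomputable def cntJ (ι : JJ N → B) (b : Fin n → B) : JJ N →₀ ℕ :=
  Finsupp.equivFunOnFinite.symm fun a => cnt b (ι a)

noncomputable def polyOf (ι : JJ N → B) (P A : TM B n) : MvPolynomial (JJ N) ℂ :=
  ∑ b, monomial (cntJ ι b) ((A * P) b b)

theorem coeff_polyOf (ι : JJ N → B) (P A : TM B n) (ν : JJ N →₀ ℕ) :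
    coeff ν (polyOf ι P A) = ∑ b, if cntJ ι b = ν then (A * P) b b else 0 := by
  rw [polyOf, coeff_sum]
  refine Finset.sum_congr rfl fun b _ => ?_
  rw [coeff_monomial]

theorem Dop_polyOf (ι : JJ N → B) (P A : TM B n) (a : JJ N) :
    Dop a (polyOf ι P A) = polyOf ι P (EE n (ι a) (ι a) * A) := by
  ext ν
  rw [coeff_Dop, coeff_polyOf, coeff_polyOf, Finset.mul_sum]
  refine Finset.sum_congr rfl fun b _ => ?_
  split_ifs with h
  · rw [mul_assoc, EE_self', Matrix.diagonal_mul, ← h]; rfl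
  · simp

theorem eval_polyOf {ι : JJ N → B} (hι : Function.Injective ι) (P A : TM B n) (x : JJ N → ℂ) :
    eval x (polyOf ι P A) = psi P (tp n (Matrix.diagonal (ex ι x)) * A) := by
  rw [polyOf, map_sum, psi, Matrix.trace, tp_diagonal]
  refine Finset.sum_congr rfl fun b _ => ?_
  rw [Matrix.diag_apply, mul_assoc, Matrix.diagonal_mul, eval_monomial, mul_comm]
  congr 1
  rw [Finsupp.prod_fintype _ _ (by simp), prod_cnt]
  apply Fintype.prod_of_injective ι hι
  · intro c hc
    rw [ex, Function.extend_apply' _ _ _ (by simpa using hc)]; simp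
  · intro c
    rw [ex, hι.extend_apply]; rfl

theorem D_EE_self (x : B → ℂ) (a : B) :
    tp n (Matrix.diagonal x) * EE n a a = EE n a a * tp n (Matrix.diagonal x) := by
  rw [EE_self', tp_diagonal, Matrix.diagonal_mul_diagonal, Matrix.diagonal_mul_diagonal]
  simp only [mul_comm]

variable {blk : B → K} {pos : B → ℕ} {lam : B → ℕ} {v : (Fin n → B) → ℂ}
    {σ : Equiv.Perm B} {ι : JJ N → B} {h : ℕ} {P : TM B n}

namespace Sys

theorem sblkpow (S : Sys blk pos lam v σ ι h) (i : ℕ) (a b : B) (hab : blk a = blk b) :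
    blk ((σ ^ i) a) = blk ((σ ^ i) b) := by
  induction i with
  | zero => simpa using hab
  | succ i ih => rw [pow_succ', Equiv.Perm.mul_apply, Equiv.Perm.mul_apply]; exact S.sblk _ _ ih

theorem SS_Sg (S : Sys blk pos lam v σ ι h) :
    ∀ u ∈ SS blk pos v, (tp n (permM σ)).mulVec u ∈ SS blk pos v :=
  mulVec_span _ _ _ fun u hu => by
    induction hu with
    | base => rw [S.sv]; exact Submodule.subset_span Reach.base
    | step u a c hu h1 h2 ih =>
      rw [Matrix.mulVec_mulVec, Sg_EE, ← Matrix.mulVec_mulVec]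
      exact SS_low _ _ (S.sblk _ _ h1) (by rw [S.spos, S.spos]; exact h2) _ ih

theorem pSg (S : Sys blk pos lam v σ ι h) (hP : IsProjOn (SS blk pos v) P) :
    Pres P (tp n (permM σ)) := hP.pres S.SS_Sg

theorem pEE (S : Sys blk pos lam v σ ι h) (hP : IsProjOn (SS blk pos v) P) (a c : B)
    (hac : blk a = blk c) : Pres P (EE n a c) := hP.pres (S.H.SS_EE a c hac)

theorem ptp (S : Sys blk pos lam v σ ι h) (hP : IsProjOn (SS blk pos v) P) (g : Matrix B B ℂ)
    (hg : BDiag blk g) : Pres P (tp n g) := hP.pres (S.H.SS_tp g hg)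

theorem pD (S : Sys blk pos lam v σ ι h) (hP : IsProjOn (SS blk pos v) P) (x : B → ℂ) :
    Pres P (tp n (Matrix.diagonal x)) := S.ptp hP _ fun a c hac =>
  Matrix.diagonal_apply_ne _ (by rintro rfl; exact hac rfl)

theorem pPP (S : Sys blk pos lam v σ ι h) (hP : IsProjOn (SS blk pos v) P) (mu : B → ℕ) :
    Pres P (PP mu : TM B n) := hP.pres (S.H.SS_PP mu)

theorem ex_free (S : Sys blk pos lam v σ ι h) (x : JJ N → ℂ) (i : ℕ) (hi : 0 < i) (hih : i < h)
    (a : JJ N) : ex ι x ((σ ^ i) (ι a)) = 1 := by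
  rw [ex, Function.extend_apply']
  · rfl
  · rintro ⟨a', ha'⟩; exact S.free i hi hih a a' ha'.symm

theorem loopE (S : Sys blk pos lam v σ ι h) (hP : IsProjOn (SS blk pos v) P) (x : JJ N → ℂ)
    (a c : JJ N) (hac : a.1 = c.1) (B' : TM B n) (pB : Pres P B')
    (hB : ∀ i, 0 < i → i < h → EE n ((σ ^ i) (ι a)) ((σ ^ i) (ι c)) * B'
      = B' * EE n ((σ ^ i) (ι a)) ((σ ^ i) (ι c))) :
    psi P (tp n (Matrix.diagonal (ex ι x)) * tp n (permM σ) * EE n (ι a) (ι c) * B')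
      = psi P (tp n (Matrix.diagonal (ex ι x)) * EE n (ι a) (ι c) * tp n (permM σ) * B') := by
  have := loop (P := P) (Sg := tp n (permM σ)) (D := tp n (Matrix.diagonal (ex ι x))) (B' := B')
    (fun i => EE n ((σ ^ i) (ι a)) ((σ ^ i) (ι c))) h S.h0 (S.pSg hP) (S.pD hP _) pB
    (fun i => S.pEE hP _ _ (S.sblkpow i _ _ ((S.blk_iff a c).2 hac)))
    (fun i => by rw [Sg_EE, pow_succ', Equiv.Perm.mul_apply, Equiv.Perm.mul_apply])
    (fun i hi hih => by
      have := EE_diag (n := n) (ex ι x) ((σ ^ i) (ι a)) ((σ ^ i) (ι c))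
      rwa [S.ex_free x i hi hih, S.ex_free x i hi hih, one_smul, one_smul] at this)
    hB (by simp [S.sh])
  simpa using this

theorem EE_comm_of (S : Sys blk pos lam v σ ι h) (a c a' c' : JJ N) (i : ℕ) (hi : 0 < i)
    (hih : i < h) : EE n ((σ ^ i) (ι a)) ((σ ^ i) (ι c)) * EE n (ι a') (ι c')
      = EE n (ι a') (ι c') * EE n ((σ ^ i) (ι a)) ((σ ^ i) (ι c)) := by
  rw [← sub_eq_zero, EE_bracket, if_neg (S.free i hi hih c a'),
    if_neg (fun h => S.free i hi hih a c' h.symm), sub_zero]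

theorem pone (hP : IsProjOn (SS blk pos v) P) : Pres P (1 : TM B n) :=
  hP.pres fun u hu => by simpa using hu

theorem diag1 (S : Sys blk pos lam v σ ι h) (hP : IsProjOn (SS blk pos v) P) (x : JJ N → ℂ)
    (a : JJ N) :
    psi P (tp n (Matrix.diagonal (ex ι x)) * (EE n (ι a) (ι a) * tp n (permM σ)))
      = psi P (tp n (Matrix.diagonal (ex ι x)) * tp n (permM σ) * EE n (ι a) (ι a)) := by
  have := S.loopE hP x a a rfl 1 (pone hP) (fun i _ _ => by simp)
  rw [mul_one, mul_one] at this
  rw [this, mul_assoc]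

theorem diag2 (S : Sys blk pos lam v σ ι h) (hP : IsProjOn (SS blk pos v) P) (x : JJ N → ℂ)
    (a : JJ N) :
    psi P (tp n (Matrix.diagonal (ex ι x)) * (EE n (ι a) (ι a) * (EE n (ι a) (ι a) *
      tp n (permM σ))))
      = psi P (tp n (Matrix.diagonal (ex ι x)) * tp n (permM σ) *
        (EE n (ι a) (ι a) * EE n (ι a) (ι a))) := by
  have pE := S.pEE hP (ι a) (ι a) rfl
  have := S.loopE hP x a a rfl (EE n (ι a) (ι a)) pE
    (fun i hi hih => S.EE_comm_of _ _ _ _ i hi hih)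
  rw [← mul_assoc _ (EE n (ι a) (ι a)) (EE n (ι a) (ι a)), this, ← mul_assoc, D_EE_self,
    mul_assoc, psi_comm pE ((S.pD hP _).mul (pE.mul (S.pSg hP)))]
  congr 1
  simp only [mul_assoc]
  rw [← mul_assoc, D_EE_self, mul_assoc]

theorem cross (S : Sys blk pos lam v σ ι h) (hP : IsProjOn (SS blk pos v) P) (x : JJ N → ℂ)
    (a c : JJ N) (hac : a.1 = c.1) :
    x c * psi P (tp n (Matrix.diagonal (ex ι x)) * tp n (permM σ) *
        (EE n (ι a) (ι c) * EE n (ι c) (ι a)))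
      = x a * psi P (tp n (Matrix.diagonal (ex ι x)) * tp n (permM σ) *
        (EE n (ι c) (ι a) * EE n (ι a) (ι c))) := by
  have hb := (S.blk_iff a c).2 hac
  have pE := S.pEE hP (ι a) (ι c) hb
  have pE' := S.pEE hP (ι c) (ι a) hb.symm
  have h1 := S.loopE hP x a c hac (EE n (ι c) (ι a)) pE'
    (fun i hi hih => S.EE_comm_of _ _ _ _ i hi hih)
  have h2 := EE_diag (n := n) (ex ι x) (ι a) (ι c)
  rw [show ex ι x (ι a) = x a from S.inj.extend_apply _ _ _,
    show ex ι x (ι c) = x c from S.inj.extend_apply _ _ _] at h2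
  rw [← mul_assoc _ (EE n (ι a) (ι c)) (EE n (ι c) (ι a)), h1, ← psi_smul, mul_assoc,
    ← smul_mul_assoc, h2, smul_mul_assoc, psi_smul, mul_assoc,
    psi_comm pE ((S.pD hP _).mul ((S.pSg hP).mul pE'))]
  congr 2
  noncomm_ring

noncomputable def QQ (σ : Equiv.Perm B) (ι : JJ N → B) (P : TM B n) (p : JJ N × JJ N) :
    MvPolynomial (JJ N) ℂ :=
  polyOf ι P (tp n (permM σ) * (EE n (ι p.1) (ι p.2) * EE n (ι p.2) (ι p.1)
    + EE n (ι p.2) (ι p.1) * EE n (ι p.1) (ι p.2)))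

theorem hQ (S : Sys blk pos lam v σ ι h) (hP : IsProjOn (SS blk pos v) P) (p : JJ N × JJ N)
    (hp : p ∈ Plt N) : (X p.1 - X p.2) * QQ σ ι P p = (X p.1 + X p.2) *
      (Dop p.1 (polyOf ι P (tp n (permM σ))) - Dop p.2 (polyOf ι P (tp n (permM σ)))) := by
  obtain ⟨a, c⟩ := p
  have hp' : a.1 = c.1 ∧ a.2.val < c.2.val := by simpa [Plt] using hp
  apply MvPolynomial.funext
  intro x
  have hc := S.cross hP x a c hp'.1
  have hne : a ≠ c := by rintro rfl; simp at hp'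
  have hb := EE_bracket (n := n) (ι a) (ι c) (ι c) (ι a)
  rw [if_pos rfl, if_pos rfl] at hb
  have h3 := congrArg (fun M => psi P (tp n (Matrix.diagonal (ex ι x)) * tp n (permM σ) * M)) hb
  simp only [mul_sub, psi_sub] at h3
  simp only [map_mul, map_sub, map_add, eval_X, QQ, Dop_polyOf, eval_polyOf S.inj,
    S.diag1 hP]
  rw [← mul_assoc (tp n (Matrix.diagonal (ex ι x))), mul_add, psi_add, ← h3]
  linear_combination (-2 : ℂ) * hc

theorem Cas_eq (S : Sys blk pos lam v σ ι h) :
    Cas n blk (fun k => ∃ a, blk (ι a) = k) = ∑ a, EE n (ι a) (ι a) * EE n (ι a) (ι a)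
      + ∑ p ∈ Plt N, (EE n (ι p.1) (ι p.2) * EE n (ι p.2) (ι p.1)
        + EE n (ι p.2) (ι p.1) * EE n (ι p.1) (ι p.2)) := by
  have h1 : Cas n blk (fun k => ∃ a, blk (ι a) = k) = ∑ a : JJ N, ∑ c : JJ N,
      if a.1 = c.1 then EE n (ι a) (ι c) * EE n (ι c) (ι a) else 0 := by
    rw [Cas]
    symm
    apply Fintype.sum_of_injective ι S.inj
    · intro b hb
      refine Finset.sum_eq_zero fun c _ => if_neg ?_
      rintro ⟨-, a, ha⟩
      exact hb (S.rng b a ha.symm)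
    · intro a
      apply Fintype.sum_of_injective ι S.inj
      · intro b hb
        rw [if_neg]
        rintro ⟨h1, -⟩
        exact hb (S.rng b a h1.symm)
      · intro c
        simp only [S.blk_iff]
        by_cases hac : a.1 = c.1
        · rw [if_pos hac, if_pos ⟨hac, a, rfl⟩]
        · rw [if_neg hac, if_neg (fun h => hac h.1)]
  have h2 := sum_Pne (N := N) (fun p => EE n (ι p.1) (ι p.2) * EE n (ι p.2) (ι p.1))
  simp only [Prod.fst_swap, Prod.snd_swap] at h2
  rw [h1, ← h2, Pne, Finset.sum_filter, Fintype.sum_prod_type, ← Finset.sum_add_distrib]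
  refine Finset.sum_congr rfl fun a _ => ?_
  rw [← Finset.add_sum_erase _ _ (Finset.mem_univ a), if_pos rfl]
  congr 1
  rw [← Finset.add_sum_erase Finset.univ (fun y => if a.1 = y.1 ∧ a ≠ y then
      EE n (ι a) (ι y) * EE n (ι y) (ι a) else 0) (Finset.mem_univ a)]
  simp only [ne_eq, not_true_eq_false, and_false, if_false, zero_add]
  refine Finset.sum_congr rfl fun c hc => ?_
  have hc' : ¬ a = c := fun h => (Finset.mem_erase.1 hc).1 h.symm
  simp [hc']

theorem hcas (S : Sys blk pos lam v σ ι h) (hP : IsProjOn (SS blk pos v) P) :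
    ∃ z : ℂ, ∑ a, Dop a (Dop a (polyOf ι P (tp n (permM σ)))) + ∑ p ∈ Plt N, QQ σ ι P p
      = C z * polyOf ι P (tp n (permM σ)) := by
  obtain ⟨z, hz⟩ := S.H.Cas_scalar (fun k => ∃ a, blk (ι a) = k)
  refine ⟨z, ?_⟩
  have hz' : Cas n blk (fun k => ∃ a, blk (ι a) = k) * P = (z • (1 : TM B n)) * P := by
    apply hP.ext_on
    intro u hu
    rw [hz u hu, Matrix.smul_mulVec, Matrix.one_mulVec]
  apply MvPolynomial.funext
  intro x
  simp only [map_mul, map_add, map_sum, eval_C, QQ, Dop_polyOf, eval_polyOf S.inj, S.diag2 hP]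
  have h1 : psi P (tp n (Matrix.diagonal (ex ι x)) * tp n (permM σ) *
      Cas n blk (fun k => ∃ a, blk (ι a) = k)) =
      z * psi P (tp n (Matrix.diagonal (ex ι x)) * tp n (permM σ)) := by
    rw [psi, mul_assoc _ _ P, hz', psi, smul_mul_assoc, one_mul, Matrix.mul_smul, Matrix.trace_smul,
      smul_eq_mul]
  rw [← h1, S.Cas_eq, mul_add, psi_add, Finset.mul_sum, Finset.mul_sum]
  simp only [psi, Finset.sum_mul, Matrix.trace_sum, mul_assoc]

theorem loopW (S : Sys blk pos lam v σ ι h) (hP : IsProjOn (SS blk pos v) P) (x : JJ N → ℂ)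
    (a c : JJ N) (hac : a.1 = c.1) :
    psi P (tp n (Matrix.diagonal (ex ι x)) * tp n (permM σ) *
        tp n (permM (Equiv.swap (ι a) (ι c))) * tp n (permM (Equiv.swap (ι a) (ι c))))
      = psi P (tp n (Matrix.diagonal (ex ι x)) * tp n (permM (Equiv.swap (ι a) (ι c))) *
        tp n (permM σ) * tp n (permM (Equiv.swap (ι a) (ι c)))) := by
  have hb := (S.blk_iff a c).2 hac
  have := loop (P := P) (Sg := tp n (permM σ)) (D := tp n (Matrix.diagonal (ex ι x)))
    (B' := tp n (permM (Equiv.swap (ι a) (ι c))))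
    (fun i => tp n (permM (Equiv.swap ((σ ^ i) (ι a)) ((σ ^ i) (ι c))))) h S.h0 (S.pSg hP)
    (S.pD hP _) (S.ptp hP _ (permM_swap_BDiag hb))
    (fun i => S.ptp hP _ (permM_swap_BDiag (S.sblkpow i _ _ hb)))
    (fun i => by
      rw [Sg_W, pow_succ', Equiv.Perm.mul_apply, Equiv.Perm.mul_apply, Equiv.swap_apply_apply σ])
    (fun i hi hih => by
      rw [Sg_D]
      congr 3
      funext b
      simp only [Function.comp, Equiv.swap_apply_def]
      split_ifs with h1 h2
      · rw [h1, S.ex_free x i hi hih, S.ex_free x i hi hih]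
      · rw [h2, S.ex_free x i hi hih, S.ex_free x i hi hih]
      · rfl)
    (fun i hi hih => by
      rw [Sg_W, ← Equiv.swap_apply_apply, Equiv.swap_apply_of_ne_of_ne, Equiv.swap_apply_of_ne_of_ne]
      all_goals exact fun h => S.free i hi hih _ _ h.symm)
    (by simp [S.sh])
  simpa using this

theorem hsym (S : Sys blk pos lam v σ ι h) (hP : IsProjOn (SS blk pos v) P) (a c : JJ N)
    (hac : a.1 = c.1) : rename (Equiv.swap a c) (polyOf ι P (tp n (permM σ)))
      = polyOf ι P (tp n (permM σ)) := by
  apply MvPolynomial.funext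
  intro x
  have pW := S.ptp hP _ (permM_swap_BDiag ((S.blk_iff a c).2 hac))
  have hW : tp n (permM (Equiv.swap (ι a) (ι c))) * tp n (permM (Equiv.swap (ι a) (ι c)))
      = 1 := by
    rw [← tp_mul, ← permM_mul, Equiv.swap_mul_self, permM_one, tp_one]
  have h1 : ex ι (x ∘ Equiv.swap a c) = ex ι x ∘ Equiv.swap (ι a) (ι c) := by
    funext b
    simp only [Function.comp]
    by_cases hb : ∃ a', ι a' = b
    · obtain ⟨a', rfl⟩ := hb
      rw [S.inj.swap_apply, ex, ex, S.inj.extend_apply, S.inj.extend_apply]; rfl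
    · rw [Equiv.swap_apply_of_ne_of_ne, ex, ex, Function.extend_apply' _ _ _ hb,
        Function.extend_apply' _ _ _ hb]
      · rintro rfl; exact hb ⟨a, rfl⟩
      · rintro rfl; exact hb ⟨c, rfl⟩
  have h2 : tp n (Matrix.diagonal (ex ι (x ∘ Equiv.swap a c))) =
      tp n (permM (Equiv.swap (ι a) (ι c))) * (tp n (Matrix.diagonal (ex ι x)) *
        tp n (permM (Equiv.swap (ι a) (ι c)))) := by
    rw [Sg_D, ← mul_assoc, hW, one_mul, h1]
  rw [eval_rename, eval_polyOf S.inj, eval_polyOf S.inj, h2, mul_assoc,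
    psi_comm pW (((S.pD hP _).mul pW).mul (S.pSg hP)), ← S.loopW hP x a c hac, mul_assoc _ _ (tp n _),
    hW, mul_one]

end Sys
end Main
end GreenII

namespace GreenII

section Main2
set_option linter.unusedSectionVars false
open MvPolynomial
variable {B K : Type} [Fintype B] {κ : Type} [Fintype κ] {N : κ → ℕ} {n : ℕ}

theorem psi_PP (P A : TM B n) (mu : B → ℕ) :
    psi P (PP mu * A) = ∑ b, if cnt b = mu then (A * P) b b else 0 := by
  rw [psi, Matrix.trace, PP]
  refine Finset.sum_congr rfl fun b _ => ?_
  rw [Matrix.diag_apply, mul_assoc, Matrix.diagonal_mul, ite_mul, one_mul, zero_mul]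

theorem coeff_polyOf' (ι : JJ N → B) (P A : TM B n) (ν : JJ N →₀ ℕ) :
    coeff ν (polyOf ι P A) = ∑ mu ∈ (Finset.univ.image (cnt : (Fin n → B) → B → ℕ)).filter
      (fun mu => mu ∘ ι = ν), psi P (PP mu * A) := by
  rw [coeff_polyOf]
  simp only [psi_PP]
  rw [Finset.sum_comm]
  refine Finset.sum_congr rfl fun b _ => ?_
  rw [Finset.sum_ite_eq]
  have : cntJ ι b = ν ↔ cnt b ∈ (Finset.univ.image (cnt : (Fin n → B) → B → ℕ)).filter
      (fun mu => mu ∘ ι = ν) := by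
    rw [Finset.mem_filter]
    constructor
    · rintro rfl
      exact ⟨Finset.mem_image_of_mem _ (Finset.mem_univ _), rfl⟩
    · rintro ⟨-, h⟩
      apply DFunLike.coe_injective
      exact h
  by_cases h : cntJ ι b = ν
  · rw [if_pos h, if_pos (this.1 h)]
  · rw [if_neg h, if_neg (fun h' => h (this.2 h'))]

theorem PP_Sg (s : Equiv.Perm B) (mu : B → ℕ) :
    (PP mu : TM B n) * tp n (permM s) = tp n (permM s) * PP (mu ∘ s) := by
  ext b' b
  rw [PP, PP, Matrix.diagonal_mul, Matrix.mul_diagonal, tp_permM_apply]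
  by_cases h : b' = s ∘ b
  · subst h
    have : cnt (s ∘ b) = mu ↔ cnt b = mu ∘ s := by
      have h1 : ∀ a, cnt (s ∘ b) (s a) = cnt b a := by
        intro a; simp [cnt]
      constructor
      · rintro rfl; funext a; exact (h1 a).symm
      · intro h; funext a
        rw [← s.apply_symm_apply a, h1, h]; rfl
    simp only [if_true, mul_one, one_mul]
    by_cases h2 : cnt b = mu ∘ s
    · rw [if_pos h2, if_pos (this.2 h2)]
    · rw [if_neg h2, if_neg (fun h => h2 (this.1 h))]
  · simp [h]

theorem PP_PP (mu mu' : B → ℕ) :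
    (PP mu : TM B n) * PP mu' = if mu = mu' then PP mu else 0 := by
  rw [PP, PP, Matrix.diagonal_mul_diagonal]
  split_ifs with h
  · subst h; congr 1; funext b; split_ifs <;> simp
  · ext b' b
    rw [Matrix.diagonal_apply]
    split_ifs with h1 h2 h3 <;> simp_all

variable {blk : B → K} {pos : B → ℕ} {lam : B → ℕ} {v : (Fin n → B) → ℂ}
    {σ : Equiv.Perm B} {ι : JJ N → B} {h : ℕ} {P : TM B n}

namespace Sys

theorem hdom (S : Sys blk pos lam v σ ι h) (hP : IsProjOn (SS blk pos v) P) (ν : JJ N →₀ ℕ)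
    (hν : coeff ν (polyOf ι P (tp n (permM σ))) ≠ 0) : Dom (⇑ν) (lam ∘ ι) := by
  rw [coeff_polyOf'] at hν
  obtain ⟨mu, hmu, hne⟩ := Finset.exists_ne_zero_of_sum_ne_zero hν
  have hmu' : mu ∘ ι = ν := (Finset.mem_filter.1 hmu).2
  rw [psi_comm (S.pPP hP mu) (S.pSg hP), psi, mul_assoc] at hne
  have h1 : ∃ u, (PP mu : TM B n).mulVec (P.mulVec u) ≠ 0 := by
    by_contra hcon
    push Not at hcon
    apply hne
    have : (PP mu : TM B n) * P = 0 := by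
      apply Matrix.ext_of_mulVec_single
      intro i
      rw [← Matrix.mulVec_mulVec, hcon, Matrix.zero_mulVec]
    rw [this, mul_zero, Matrix.trace_zero]
  obtain ⟨u, hu⟩ := h1
  intro y hy
  have hy' : BAnt blk pos (Function.extend ι y 0) := by
    intro a c hac hpos
    by_cases ha : ∃ a', ι a' = a
    · obtain ⟨a', rfl⟩ := ha
      obtain ⟨c', rfl⟩ := S.rng c a' hac.symm
      rw [S.inj.extend_apply, S.inj.extend_apply]
      exact hy _ _ ((S.blk_iff _ _).1 hac) (by rwa [S.pos_eq, S.pos_eq] at hpos)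
    · have hc : ¬ ∃ c', ι c' = c := by
        rintro ⟨c', rfl⟩; exact ha (S.rng a c' hac)
      rw [Function.extend_apply' _ _ _ ha, Function.extend_apply' _ _ _ hc]
      simp
  have h2 := S.H.SS_PP_dom mu (hP.mem u) hu _ hy'
  have h3 : ∀ f : B → ℕ, ∑ a, y a * ((f ∘ ι) a : ℤ) = ∑ b, Function.extend ι y 0 b * (f b : ℤ) := by
    intro f
    apply Fintype.sum_of_injective ι S.inj
    · intro b hb
      rw [Function.extend_apply' _ _ _ (by simpa using hb)]; simp
    · intro a; rw [S.inj.extend_apply]; rfl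
  rw [← h3, ← h3, hmu'] at h2
  exact h2

theorem hcoef (S : Sys blk pos lam v σ ι h) (hP : IsProjOn (SS blk pos v) P) :
    coeff (Finsupp.equivFunOnFinite.symm (lam ∘ ι)) (polyOf ι P (tp n (permM σ))) = 1 := by
  rw [coeff_polyOf']
  obtain ⟨b0, hb0⟩ : ∃ b, v b ≠ 0 := by
    by_contra hcon
    push Not at hcon
    exact S.H.v0 (funext hcon)
  rw [Finset.sum_eq_single lam]
  · rw [psi_comm (S.pPP hP lam) (S.pSg hP), psi, mul_assoc]
    set M : TM B n := PP lam * P with hM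
    have hMu : ∀ u, ∃ z : ℂ, z • v = M.mulVec u := by
      intro u
      rw [hM, ← Matrix.mulVec_mulVec]
      exact Submodule.mem_span_singleton.1 (S.H.SS_PP_lam _ (hP.mem u))
    have hMv : M.mulVec v = v := by
      rw [hM, ← Matrix.mulVec_mulVec, hP.fix _ (Submodule.subset_span Reach.base), S.H.PP_v]
    have h1 : tp n (permM σ) * M = M := by
      apply Matrix.ext_of_mulVec_single
      intro i
      obtain ⟨z, hz⟩ := hMu (Pi.single i 1)
      rw [← Matrix.mulVec_mulVec, ← hz, Matrix.mulVec_smul, S.sv]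
    rw [h1]
    have h2 : ∀ b, M b b * v b0 = M b0 b * v b := by
      intro b
      obtain ⟨z, hz⟩ := hMu (Pi.single b 1)
      have h3 := congrFun hz b
      have h4 := congrFun hz b0
      simp only [Pi.smul_apply, smul_eq_mul, Matrix.mulVec_single_one, Matrix.col_apply] at h3 h4
      rw [← h3, ← h4]; ring
    have h5 : Matrix.trace M * v b0 = v b0 := by
      rw [Matrix.trace, Finset.sum_mul]
      simp only [Matrix.diag_apply, h2]
      exact congrFun hMv b0
    exact mul_right_cancel₀ hb0 (by rw [h5, one_mul])
  · intro mu hmu hne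
    have hmu' : mu ∘ ι = lam ∘ ι := (Finset.mem_filter.1 hmu).2
    have hinv : ¬ mu ∘ σ = mu := by
      intro hinv
      apply hne
      have hp : ∀ i b, mu ((σ ^ i) b) = mu b ∧ lam ((σ ^ i) b) = lam b := by
        intro i
        induction i with
        | zero => intro b; simp
        | succ i ih =>
          intro b
          rw [pow_succ', Equiv.Perm.mul_apply]
          exact ⟨(congrFun hinv _).trans (ih b).1, (S.slam _).trans (ih b).2⟩
      funext b
      obtain ⟨i, -, a, rfl⟩ := S.cover b
      rw [(hp i _).1, (hp i _).2]
      exact congrFun hmu' a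
    have h1 : (PP mu : TM B n) = PP mu * PP mu := by rw [PP_PP, if_pos rfl]
    rw [h1, mul_assoc, psi_comm (S.pPP hP mu) ((S.pPP hP mu).mul (S.pSg hP)), PP_Sg, mul_assoc, PP_PP,
      if_neg hinv, mul_zero, psi, zero_mul, Matrix.trace_zero]
  · intro hcon
    exfalso
    apply hcon
    rw [Finset.mem_filter]
    refine ⟨?_, rfl⟩
    rw [← S.H.wt b0 hb0]
    exact Finset.mem_image_of_mem _ (Finset.mem_univ _)

theorem weylG (S : Sys blk pos lam v σ ι h) (hP : IsProjOn (SS blk pos v) P) :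
    polyOf ι P (tp n (permM σ)) * Alt (del N) = Alt (lam ∘ ι + del N) := by
  obtain ⟨z, hz⟩ := S.hcas hP
  exact weyl _ (lam ∘ ι) S.lamBA (S.hdom hP) (S.hcoef hP) (fun a b _ hab => S.hsym hP a b hab)
    (QQ σ ι P) (S.hQ hP) z hz

theorem F_step (S : Sys blk pos lam v σ ι h) (hP : IsProjOn (SS blk pos v) P) (x z : B → ℂ)
    (i : ℕ) : psi P (tp n (Matrix.diagonal (x * z)) * tp n (permM σ)) =
      psi P (tp n (Matrix.diagonal (x * (z ∘ ⇑(σ ^ i)))) * tp n (permM σ)) := by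
  induction i with
  | zero => rfl
  | succ i ih =>
    have e : z ∘ ⇑(σ ^ (i + 1)) = (z ∘ ⇑(σ ^ i)) ∘ σ := by
      rw [pow_succ]; rfl
    rw [ih, e, ← D_mul, mul_assoc, Sg_D, ← mul_assoc,
      psi_comm ((S.pD hP _).mul (S.pSg hP)) (S.pD hP _), ← mul_assoc, D_mul, mul_comm x]

theorem F_prod (S : Sys blk pos lam v σ ι h) (hP : IsProjOn (SS blk pos v) P) (z : ℕ → B → ℂ)
    (k : ℕ) : ∀ w : B → ℂ,
      psi P (tp n (Matrix.diagonal (w * ∏ i ∈ Finset.range k, z i)) * tp n (permM σ)) =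
      psi P (tp n (Matrix.diagonal (w * ∏ i ∈ Finset.range k, (z i ∘ ⇑(σ ^ i)))) *
        tp n (permM σ)) := by
  induction k with
  | zero => intro w; simp
  | succ k ih =>
    intro w
    rw [Finset.prod_range_succ, ← mul_assoc, S.F_step hP _ _ k, mul_right_comm, ih,
      Finset.prod_range_succ, mul_right_comm, ← mul_assoc]

theorem F_eval (S : Sys blk pos lam v σ ι h) (hP : IsProjOn (SS blk pos v) P) (x : B → ℂ) :
    psi P (tp n (Matrix.diagonal x) * tp n (permM σ)) =
      eval (fun a => ∏ i ∈ Finset.range h, x ((σ ^ i) (ι a))) (polyOf ι P (tp n (permM σ))) := by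
  rw [eval_polyOf S.inj]
  have h1 := S.F_prod hP (fun i b => if ∃ a, (σ ^ i) (ι a) = b then x b else 1) h 1
  rw [one_mul, one_mul] at h1
  have e1 : ∏ i ∈ Finset.range h, (fun b => if ∃ a, (σ ^ i) (ι a) = b then x b else 1) = x := by
    funext b
    rw [Finset.prod_apply]
    obtain ⟨i, hi, a, rfl⟩ := S.cover b
    rw [Finset.prod_eq_single i, if_pos ⟨a, rfl⟩]
    · intro j hj hji
      rw [if_neg]
      rintro ⟨a', ha'⟩
      have hj' := Finset.mem_range.1 hj
      rcases lt_or_gt_of_ne hji with h1 | h1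
      · obtain ⟨t, rfl⟩ := Nat.exists_eq_add_of_le h1.le
        rw [pow_add, Equiv.Perm.mul_apply] at ha'
        exact S.free t (by omega) (by omega) a a' ((σ ^ j).injective ha').symm
      · obtain ⟨t, rfl⟩ := Nat.exists_eq_add_of_le h1.le
        rw [pow_add, Equiv.Perm.mul_apply] at ha'
        exact S.free t (by omega) (by omega) a' a ((σ ^ i).injective ha')
    · intro hcon; exact absurd (Finset.mem_range.2 hi) hcon
  have e2 : ∏ i ∈ Finset.range h, ((fun b => if ∃ a, (σ ^ i) (ι a) = b then x b else 1) ∘ ⇑(σ ^ i))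
      = ex ι (fun a => ∏ i ∈ Finset.range h, x ((σ ^ i) (ι a))) := by
    funext b
    rw [Finset.prod_apply]
    by_cases hb : ∃ a, ι a = b
    · obtain ⟨a, rfl⟩ := hb
      rw [ex, S.inj.extend_apply]
      refine Finset.prod_congr rfl fun i _ => ?_
      exact if_pos ⟨a, rfl⟩
    · rw [ex, Function.extend_apply' _ _ _ hb]
      refine Finset.prod_eq_one fun i _ => ?_
      simp only [Function.comp, EmbeddingLike.apply_eq_iff_eq]
      rw [if_neg hb]
  rw [e1, e2] at h1
  exact h1

end Sys
end Main2
end GreenII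

namespace GreenII

section Fin1
set_option linter.unusedSectionVars false
open MvPolynomial
variable {κ : Type} [Fintype κ] {N : κ → ℕ}

theorem map_hZ {R R' : Type*} [CommRing R] [CommRing R'] (f : R →+* R') (M : ℕ) (z : ℤ)
    (v : Fin M → R) : f (hZ M z v) = hZ M z (fun i => f (v i)) := by
  unfold hZ
  split_ifs
  · simp [hR]
  · simp

theorem eval_of_weyl (G : MvPolynomial (JJ N) ℂ) (lam : JJ N → ℕ)
    (hG : G * Alt (del N) = Alt (lam + del N)) (x : JJ N → ℂ) :
    eval x G = ∏ k, Matrix.det (Matrix.of fun i j : Fin (N k) =>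
      hZ (N k) ((lam ⟨k, i⟩ + j : ℤ) - i) (fun l => x ⟨k, l⟩)) := by
  have hne : Alt (del N) ≠ 0 := by
    rw [Alt_del, Finset.prod_ne_zero_iff]
    intro p hp
    rw [sub_ne_zero]
    intro h
    have := X_injective h
    simp only [Plt, Finset.mem_filter] at hp
    rw [this] at hp
    simp at hp
  have h1 : Alt (lam + del N) = (∏ k, Matrix.det (Matrix.of fun i j : Fin (N k) =>
      hZ (N k) ((lam ⟨k, i⟩ + j : ℤ) - i) (fun l => (X ⟨k, l⟩ : MvPolynomial (JJ N) ℂ)))) *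
      Alt (del N) := by
    rw [Alt, Alt, ← Finset.prod_mul_distrib]
    exact Finset.prod_congr rfl fun k _ => jacobi_trudi (N k) (fun i => lam ⟨k, i⟩) _
  rw [h1] at hG
  rw [mul_right_cancel₀ hne hG, map_prod]
  refine Finset.prod_congr rfl fun k _ => ?_
  rw [RingHom.map_det]
  congr 1
  ext i j
  simp only [RingHom.mapMatrix_apply, Matrix.map_apply, Matrix.of_apply, map_hZ, eval_X]

theorem schurFin_eq (M : ℕ) (μ : Multiset ℕ) (w : ℕ → ℂ) :
    schurFin M μ w = Matrix.det (Matrix.of fun i j : Fin M =>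
      hZ M ((lamOf μ i + j : ℤ) - i) (fun l => w l)) := by
  rw [schurFin]
  congr 1

theorem lamOf_anti (μ : Multiset ℕ) {i j : ℕ} (hij : i ≤ j) : lamOf μ j ≤ lamOf μ i := by
  have hs : ((μ.sort (· ≤ ·)).reverse).Pairwise (fun a b => b ≤ a) := by
    rw [List.pairwise_reverse]
    exact Multiset.pairwise_sort μ _
  unfold lamOf
  by_cases hj : j < ((μ.sort (· ≤ ·)).reverse).length
  · rw [List.getD_eq_getElem _ _ hj, List.getD_eq_getElem _ _ (lt_of_le_of_lt hij hj)]
    rcases hij.lt_or_eq with h | h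
    · exact List.pairwise_iff_getElem.1 hs i j _ hj h
    · subst h; exact le_rfl
  · rw [List.getD_eq_default _ _ (not_lt.1 hj)]; exact Nat.zero_le _

end Fin1

section NT

theorem nt_basic {e p d j : ℕ} (he : e ≠ 0) (hp : p ∣ e) (hd : d = e / p) :
    0 < hOrd p j ∧ e = p * d ∧ 0 < p ∧ 0 < d ∧ hOrd p j * Esys p d j = e ∧
      Esys p d j = p.gcd j * d ∧ 0 < Esys p d j := by
  obtain ⟨q, rfl⟩ := hp
  have hp0 : 0 < p := Nat.pos_of_ne_zero (by rintro rfl; simp at he)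
  have hq0 : 0 < q := Nat.pos_of_ne_zero (by rintro rfl; simp at he)
  have hd' : d = q := by rw [hd, Nat.mul_div_cancel_left _ hp0]
  subst hd'
  have hg : 0 < p.gcd j := Nat.gcd_pos_of_pos_left _ hp0
  obtain ⟨r, hr⟩ := Nat.gcd_dvd_left p j
  have hh : hOrd p j = r := by
    rw [hOrd, ZMod.addOrderOf_coe j hp0.ne']
    exact Nat.div_eq_of_eq_mul_right hg hr
  have hr0 : 0 < r := Nat.pos_of_ne_zero (by rintro rfl; simp at hr; omega)
  have hE : p / r = p.gcd j := Nat.div_eq_of_eq_mul_left hr0 hr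
  refine ⟨by rw [hh]; exact hr0, rfl, hp0, hq0, ?_, ?_, ?_⟩
  · rw [Esys, hh, hE, ← mul_assoc, mul_comm r, ← hr]
  · rw [Esys, hh, hE]
  · rw [Esys, hh, hE]; positivity

theorem nt_dvd {e p d j : ℕ} (he : e ≠ 0) (hp : p ∣ e) (hd : d = e / p) (i : ℕ) :
    e ∣ i * j * d ↔ hOrd p j ∣ i := by
  obtain ⟨h1, h2, h3, h4, -, -, -⟩ := nt_basic (j := j) he hp hd
  rw [hOrd, addOrderOf_dvd_iff_nsmul_eq_zero, h2, Nat.mul_dvd_mul_iff_right h4, nsmul_eq_mul,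
    ← Nat.cast_mul, ZMod.natCast_eq_zero_iff]

theorem nt_inj {e p d j : ℕ} (he : e ≠ 0) (hp : p ∣ e) (hd : d = e / p) {i k k' : ℕ}
    (hk : k < Esys p d j) (hk' : k' < Esys p d j) (hi : i < hOrd p j)
    (h : ((k + i * j * d : ℕ) : ZMod e) = ((k' : ℕ) : ZMod e)) : i = 0 ∧ k = k' := by
  obtain ⟨h1, h2, h3, h4, h5, h6, h7⟩ := nt_basic (j := j) he hp hd
  rw [ZMod.natCast_eq_natCast_iff] at h
  have hE : Esys p d j ∣ i * j * d := by
    rw [h6]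
    exact Nat.mul_dvd_mul_right ((Nat.gcd_dvd_right p j).mul_left i) d
  have h8 : k + i * j * d ≡ k' [MOD Esys p d j] := h.of_dvd (h5 ▸ Nat.dvd_mul_left _ _)
  have h9 : k ≡ k' [MOD Esys p d j] := by
    refine Nat.ModEq.trans ?_ h8
    have : i * j * d ≡ 0 [MOD Esys p d j] := (Nat.modEq_zero_iff_dvd).2 hE
    simpa using (this.symm.add_left k)
  have hkk : k = k' := Nat.ModEq.eq_of_lt_of_lt h9 hk hk'
  subst hkk
  refine ⟨?_, rfl⟩
  have h10 : i * j * d ≡ 0 [MOD e] := Nat.ModEq.add_left_cancel' k (by simpa using h)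
  have := (nt_dvd he hp hd i).1 ((Nat.modEq_zero_iff_dvd).1 h10)
  exact Nat.eq_zero_of_dvd_of_lt this hi

theorem nt_cover {e p d j : ℕ} [NeZero e] (hp : p ∣ e) (hd : d = e / p) (b : ZMod e) :
    ∃ i, i < hOrd p j ∧ ∃ k, k < Esys p d j ∧ b = ((k + i * j * d : ℕ) : ZMod e) := by
  have he : e ≠ 0 := NeZero.ne e
  obtain ⟨h1, h2, h3, h4, h5, h6, h7⟩ := nt_basic (j := j) he hp hd
  let f : Fin (Esys p d j) × Fin (hOrd p j) → ZMod e :=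
    fun q => ((q.1.val + q.2.val * j * d : ℕ) : ZMod e)
  have key : ∀ q q' : Fin (Esys p d j) × Fin (hOrd p j), q.2.val ≤ q'.2.val → f q = f q' →
      q = q' := by
    rintro ⟨k, s⟩ ⟨k', s'⟩ hs hf
    simp only at hs
    obtain ⟨t, ht⟩ := Nat.exists_eq_add_of_le hs
    have h8 : ((k'.val + t * j * d : ℕ) : ZMod e) = ((k.val : ℕ) : ZMod e) := by
      simp only [f, ht] at hf
      push_cast at hf ⊢
      linear_combination -hf
    have := nt_inj he hp hd k'.2 k.2 (by have := s'.2; omega) h8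
    obtain ⟨h9, h10⟩ := this
    apply Prod.ext
    · exact Fin.ext h10.symm
    · apply Fin.ext; simp only; omega
  have hinj : Function.Injective f := by
    intro q q' hf
    rcases le_total q.2.val q'.2.val with h | h
    · exact key q q' h hf
    · exact (key q' q h hf.symm).symm
  have hbij : Function.Bijective f := by
    rw [Fintype.bijective_iff_injective_and_card]
    refine ⟨hinj, ?_⟩
    rw [Fintype.card_prod, Fintype.card_fin, Fintype.card_fin, ZMod.card, mul_comm, h5]
  obtain ⟨q, hq⟩ := hbij.2 b
  exact ⟨q.2, q.2.2, q.1, q.1.2, hq.symm⟩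

end NT

section Bridge
variable {e d n : ℕ} [NeZero e] {m : ZMod e → ℕ}

theorem bidx_ext {a c : BIdx e m} (h1 : a.1 = c.1) (h2 : a.2.val = c.2.val) : a = c := by
  obtain ⟨k, i⟩ := a
  obtain ⟨k', i'⟩ := c
  simp only at h1
  subst h1
  simp only at h2
  rw [Fin.ext h2]

theorem tauB_inj (hm : ∀ k, m (k + (d : ZMod e)) = m k) : Function.Injective (tauB e d m hm) := by
  intro a c h
  have h1 : a.1 + (d : ZMod e) = c.1 + (d : ZMod e) := congrArg (fun b : BIdx e m => b.1) h
  have h2 : a.2.val = c.2.val :=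
    congrArg (fun b : BIdx e m => b.2.val) (a₁ := tauB e d m hm a) (a₂ := tauB e d m hm c) h
  exact bidx_ext (add_right_cancel h1) h2

noncomputable def tauP (hm : ∀ k, m (k + (d : ZMod e)) = m k) : Equiv.Perm (BIdx e m) :=
  Equiv.ofBijective (tauB e d m hm) (Finite.injective_iff_bijective.1 (tauB_inj hm))

theorem tauP_pow (hm : ∀ k, m (k + (d : ZMod e)) = m k) (i : ℕ) (b : BIdx e m) :
    ((tauP hm ^ i) b).1 = b.1 + ((i * d : ℕ) : ZMod e) ∧ ((tauP hm ^ i) b).2.val = b.2.val := by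
  induction i with
  | zero => exact ⟨by simp, rfl⟩
  | succ i ih =>
    rw [pow_succ', Equiv.Perm.mul_apply]
    have h1 : (tauP hm ((tauP hm ^ i) b)).1 = ((tauP hm ^ i) b).1 + (d : ZMod e) := rfl
    have h2 : (tauP hm ((tauP hm ^ i) b)).2.val = ((tauP hm ^ i) b).2.val := rfl
    refine ⟨?_, h2.trans ih.2⟩
    rw [h1, ih.1]
    push_cast; ring

theorem permM_pow {B : Type} [Fintype B] (s : Equiv.Perm B) (i : ℕ) :
    permM (s ^ i) = permM s ^ i := by
  induction i with
  | zero => simp [permM_one]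
  | succ i ih => rw [pow_succ, permM_mul, ih, pow_succ]

theorem tp_pow {B : Type} [Fintype B] (g : Matrix B B ℂ) (i : ℕ) :
    tp n (g ^ i) = tp n g ^ i := by
  induction i with
  | zero => simp [tp_one]
  | succ i ih => rw [pow_succ, tp_mul, ih, pow_succ]

theorem tensorPow_eq (g : Matrix (BIdx e m) (BIdx e m) ℂ) : tensorPow e n m g = tp n g := rfl

theorem tauMat_pow (hm : ∀ k, m (k + (d : ZMod e)) = m k) (i : ℕ) :
    tauMat e n d m hm ^ i = tp n (permM (tauP hm ^ i)) := by
  have h1 : tauV e d m hm = permM (tauP hm) := by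
    ext b' b
    simp only [tauV, permM, Matrix.of_apply]
    have h2 : tauP hm b = tauB e d m hm b := rfl
    rw [h2]
    congr
  rw [permM_pow, tp_pow, tauMat, tensorPow_eq, h1]
  congr!

theorem theta_iter (α : ZMod e → Multiset ℕ) (i : ℕ) (k : ZMod e) :
    (theta e d)^[i] α k = α (k - ((i * d : ℕ) : ZMod e)) := by
  induction i generalizing k with
  | zero => simp
  | succ i ih =>
    rw [Function.iterate_succ_apply']
    rw [theta, ih]
    congr 1
    push_cast; ring

theorem beta_shift {β : ZMod e → Multiset ℕ} {j : ℕ} (hcj : csize e d β ∣ j) (k : ZMod e) :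
    β (k + ((j * d : ℕ) : ZMod e)) = β k := by
  have h1 : (theta e d)^[j] β = β := Function.isPeriodicPt_iff_minimalPeriod_dvd.2 hcj
  have := theta_iter (d := d) β j (k + ((j * d : ℕ) : ZMod e))
  rw [h1] at this
  rw [this]; congr 1; ring

theorem tp_diag_any {B : Type} [Fintype B] [inst : DecidableEq B] [inst2 : DecidableEq (Fin n → B)]
    (x : B → ℂ) :
    tp n (Matrix.diagonal x) = Matrix.diagonal fun b => ∏ s, x (b s) := by
  have h1 : inst = fun a b => Classical.propDecidable (a = b) := Subsingleton.elim _ _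
  have h2 : inst2 = fun a b => Classical.propDecidable (a = b) := Subsingleton.elim _ _
  subst h1 h2
  have := tp_diagonal (n := n) x
  convert this

theorem up_of {B : Type} [Fintype B] {lam : B → ℕ} {v : (Fin n → B) → ℂ}
    (wt : ∀ b, v b ≠ 0 → cnt b = lam) (a c : B) (hne : a ≠ c)
    (hU : ∀ g : Matrix B B ℂ, (∀ b, g b b = 1) →
      (∀ b b', b ≠ b' → ¬(b = a ∧ b' = c) → g b b' = 0) → (tp n g).mulVec v = v) :
    (EE n a c).mulVec v = 0 := by
  have h1 : (lie n (Matrix.single a c (1 : ℂ))).mulVec v ∈ Submodule.span ℂ {v} := by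
    apply tp_deriv
    intro t
    rw [hU]
    · exact Submodule.mem_span_singleton_self v
    · intro b
      rw [Matrix.add_apply, Matrix.smul_apply, Matrix.single_apply, if_neg, Matrix.one_apply_eq]
      · simp
      · rintro ⟨rfl, h⟩; exact hne h.symm
    · intro b b' hb hb'
      rw [Matrix.add_apply, Matrix.smul_apply, Matrix.single_apply, if_neg,
          Matrix.one_apply_ne hb]
      · simp
      · rintro ⟨rfl, rfl⟩; exact hb' ⟨rfl, rfl⟩
  obtain ⟨z, hz⟩ := Submodule.mem_span_singleton.1 h1
  have hz' : (EE n a c).mulVec v = z • v := by rw [hz]; rfl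
  rw [hz']
  by_contra hcon
  obtain ⟨b, hb⟩ : ∃ b, (z • v) b ≠ 0 := by
    by_contra h; push Not at h; exact hcon (funext h)
  have hvb : v b ≠ 0 := by
    intro h; apply hb; simp [h]
  rw [← hz'] at hb
  let y : B → ℤ := fun x => if x = a then 1 else 0
  have h2 := EE_support (u := v) (om := fun y => ∑ a, y a * ((lam a : ℕ) : ℤ))
    (fun b hb y => by rw [sum_cnt, wt b hb]) b hb y
  rw [sum_cnt b y, wt b hvb] at h2
  have ha : y a = 1 := if_pos rfl
  have hc : y c = 0 := if_neg hne.symm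
  rw [ha, hc] at h2
  omega

theorem hw_HWd {β : ZMod e → Multiset ℕ} {v : TIdx e n m → ℂ} (hv0 : v ≠ 0)
    (hhw : v ∈ hwSubmodule e n m β) :
    HWd (B := BIdx e m) (fun b => b.1) (fun b => b.2.val)
      (fun b => lamOf (β b.1) b.2.val) v := by
  rw [hwSubmodule, Submodule.mem_inf] at hhw
  obtain ⟨hU, hT⟩ := hhw
  simp only [Submodule.mem_iInf, Module.End.mem_eigenspace_iff, Matrix.mulVecLin_apply,
    one_smul, tensorPow_eq, Set.mem_ofPred_eq] at hU hT
  have wt : ∀ b, v b ≠ 0 → cnt b = fun b => lamOf (β b.1) b.2.val := by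
    intro b hb
    funext a
    set x : BIdx e m → ℂ := fun c => if c = a then 2 else 1 with hx
    have h1 := congrFun (hT x) b
    rw [tp_diag_any, Matrix.mulVec_diagonal] at h1
    have h2 : ∏ s, x (b s) = weightOf e m β x := mul_right_cancel₀ hb h1
    rw [prod_cnt, weightOf] at h2
    have h3 : ∀ f : BIdx e m → ℕ, ∏ c, x c ^ f c = 2 ^ f a := by
      intro f
      rw [Finset.prod_eq_single a]
      · simp [hx]
      · intro c _ hc; simp [hx, hc]
      · simp
    rw [h3, h3] at h2
    have h4 : (2 : ℕ) ^ cnt b a = 2 ^ lamOf (β a.1) a.2.val := by exact_mod_cast h2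
    exact Nat.pow_right_injective le_rfl h4
  refine ⟨fun a c h1 h2 => bidx_ext h1 h2, hv0, ?_, wt⟩
  intro a c hac hpos
  have hne : a ≠ c := by rintro rfl; exact lt_irrefl _ hpos
  refine up_of wt a c hne fun g hg1 hg2 => hU g ⟨hg1, fun b b' hb hb' => hg2 b b' hb ?_⟩
  rintro ⟨rfl, rfl⟩
  exact hb' ⟨hac, hpos⟩

end Bridge
end GreenII

namespace GreenII

section Final
set_option linter.unusedSectionVars false

theorem Sys.final {B K : Type} [Fintype B] {κ : Type} [Fintype κ] {N : κ → ℕ} {n : ℕ}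
    {blk : B → K} {pos : B → ℕ} {lam : B → ℕ} {v : (Fin n → B) → ℂ}
    {σ : Equiv.Perm B} {ι : JJ N → B} {h : ℕ} (S : Sys blk pos lam v σ ι h)
    [inst : DecidableEq B] (x : B → ℂ) :
    GreenII.traceOn (Submodule.span ℂ {u | ∃ g : Matrix B B ℂ, BDiag blk g ∧ IsUnit g ∧
        u = (tp n g).mulVec v})
      (Matrix.mulVecLin (tp n (Matrix.diagonal x) * tp n (permM σ))) =
    ∏ k, Matrix.det (Matrix.of fun i j : Fin (N k) =>
      hZ (N k) ((lam (ι ⟨k, i⟩) + j : ℤ) - i)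
        (fun l => ∏ s ∈ Finset.range h, x ((σ ^ s) (ι ⟨k, l⟩)))) := by
  have h1 : inst = fun a b => Classical.propDecidable (a = b) := Subsingleton.elim _ _
  subst h1
  rw [S.H.span_eq]
  obtain ⟨P, hP⟩ := exists_proj (SS blk pos v)
  rw [hP.traceOn, S.F_eval hP, eval_of_weyl _ _ (S.weylG hP)]
  · rfl
  · intro u hu
    rw [← Matrix.mulVec_mulVec]
    refine S.H.SS_tp _ ?_ _ (S.SS_Sg u hu)
    intro a c hac
    exact Matrix.diagonal_apply_ne _ (fun h => hac (h ▸ rfl))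

variable {e d n p : ℕ} [NeZero e] {m : ZMod e → ℕ}

theorem tauP_pow_pow (hm : ∀ k, m (k + (d : ZMod e)) = m k) (j i : ℕ) (b : BIdx e m) :
    (((tauP hm ^ j) ^ i) b).1 = b.1 + ((i * j * d : ℕ) : ZMod e) ∧
      (((tauP hm ^ j) ^ i) b).2.val = b.2.val := by
  rw [← pow_mul]
  have := tauP_pow hm (j * i) b
  rwa [mul_comm j i] at this ⊢

theorem m_shift (hm : ∀ k, m (k + (d : ZMod e)) = m k) (i : ℕ) (k : ZMod e) :
    m (k + ((i * d : ℕ) : ZMod e)) = m k := by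
  induction i with
  | zero => simp
  | succ i ih =>
    rw [← ih, ← hm (k + ((i * d : ℕ) : ZMod e))]
    congr 1
    push_cast; ring

def iotaJ (e : ℕ) [NeZero e] (m : ZMod e → ℕ) (E : ℕ) :
    JJ (κ := Fin E) (fun k => m ((k.val : ℕ) : ZMod e)) → BIdx e m :=
  fun a => ⟨((a.1.val : ℕ) : ZMod e), a.2⟩

theorem mkSys (hp : p ∣ e) (hd : d = e / p)
    (hm : ∀ k, m (k + (d : ZMod e)) = m k)
    {β : ZMod e → Multiset ℕ} {j : ℕ} (hcj : csize e d β ∣ j)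
    {v : TIdx e n m → ℂ} (hv0 : v ≠ 0)
    (hhw : v ∈ hwSubmodule e n m β)
    (hτ : Matrix.mulVecLin ((tauMat e n d m hm) ^ (csize e d β)) v = v) :
    Sys (B := BIdx e m) (fun b => b.1) (fun b => b.2.val) (fun b => lamOf (β b.1) b.2.val) v
      (tauP hm ^ j) (iotaJ e m (Esys p d j)) (hOrd p j) := by
  have he : e ≠ 0 := NeZero.ne e
  have hinj : ∀ a b : Fin (Esys p d j), ((a.val : ℕ) : ZMod e) = ((b.val : ℕ) : ZMod e) → a = b := by
    intro a b hab
    have := nt_inj (j := j) he hp hd a.2 b.2 (i := 0) (nt_basic (j := j) he hp hd).1 (by simpa using hab)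
    exact Fin.ext this.2
  have key := tauP_pow_pow hm j
  refine ⟨hw_HWd hv0 hhw, ?_, ?_, fun a => rfl, ?_, fun b => (tauP_pow hm j b).2, ?_, ?_, ?_,
    (nt_basic (j := j) he hp hd).1, ?_, ?_, ?_, ?_⟩
  · rintro ⟨k, i⟩ ⟨k', i'⟩ h
    have h1 : k = k' := hinj _ _ (congrArg (fun b : BIdx e m => b.1) h)
    subst h1
    have h2 : i.val = i'.val := congrArg (fun b : BIdx e m => b.2.val)
      (a₁ := iotaJ e m (Esys p d j) ⟨k, i⟩) (a₂ := iotaJ e m (Esys p d j) ⟨k, i'⟩) h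
    rw [Fin.ext h2]
  · intro a b
    exact ⟨fun h => hinj _ _ h, fun h => congrArg (fun k : Fin (Esys p d j) => ((k.val : ℕ) : ZMod e)) h⟩
  · rintro ⟨k, i⟩ ⟨k', i'⟩ h
    change k = ((k'.val : ℕ) : ZMod e) at h
    subst h
    exact ⟨⟨k', i⟩, rfl⟩
  · intro a b h
    change ((tauP hm ^ j) a).1 = ((tauP hm ^ j) b).1
    rw [(tauP_pow hm j a).1, (tauP_pow hm j b).1]
    exact congrArg (· + _) h
  · intro b
    change lamOf (β ((tauP hm ^ j) b).1) ((tauP hm ^ j) b).2.val = _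
    rw [(tauP_pow hm j b).2, (tauP_pow hm j b).1, beta_shift hcj]
  · rw [← tauMat_pow]
    obtain ⟨q, rfl⟩ := hcj
    clear hinj key
    rw [pow_mul]
    rw [Matrix.mulVecLin_apply] at hτ
    generalize tauMat e n d m hm ^ csize e d β = T at hτ ⊢
    induction q with
    | zero => simp
    | succ q ih => rw [pow_succ, ← Matrix.mulVec_mulVec, hτ, ih]
  · ext1 b
    refine bidx_ext ?_ (key _ b).2
    rw [(key _ b).1]
    have := (nt_dvd (j := j) he hp hd (hOrd p j)).2 dvd_rfl
    rw [(ZMod.natCast_eq_zero_iff _ _).2 this]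
    simp
  · rintro i h0 h1 ⟨k, l⟩ ⟨k', l'⟩ h
    have h2 : (((tauP hm ^ j) ^ i) (iotaJ e m (Esys p d j) ⟨k, l⟩)).1 = ((k'.val : ℕ) : ZMod e) :=
      congrArg (fun b : BIdx e m => b.1) h
    rw [(key _ _).1] at h2
    have := nt_inj (j := j) he hp hd k.2 k'.2 h1 (by rw [← h2]; push_cast; rfl)
    omega
  · rintro ⟨b, l⟩
    obtain ⟨i, hi, k, hk, hb⟩ := nt_cover (j := j) hp hd b
    have hmk : m b = m ((k : ℕ) : ZMod e) := by
      rw [hb, ← m_shift hm (i * j) ((k : ℕ) : ZMod e)]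
      push_cast; rfl
    refine ⟨i, hi, ⟨⟨k, hk⟩, Fin.cast hmk l⟩, bidx_ext ?_ ?_⟩
    · rw [(key _ _).1]
      change b = ((k : ℕ) : ZMod e) + _
      rw [hb]; push_cast; rfl
    · rw [(key _ _).2]; rfl
  · rintro ⟨k, i⟩ ⟨k', i'⟩ h1 h2
    change k = k' at h1
    subst h1
    exact Int.ofNat_le.2 (lamOf_anti (β ((k.val : ℕ) : ZMod e)) h2)

end Final

/-- formula (2.9.1).  Let `β ∈ 𝒫_{n,e}` with `c_{β,p} ∣ j`,
and let `V'_{β,1}` be the `G`-submodule of `V^{⊗n}` generated by a highest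
weight vector `v` of weight `β` lying in `Z_{β,1}` (i.e. fixed by `τ^c`);
it is stable under `τ^j`.  Then `Tr(Dτ^j, V'_{β,1}) = s_{β{j}}(𝒳_j)`. -/
theorem statement3 (e p d n : ℕ) [NeZero e] [NeZero n] (hp : p ∣ e) (hd : d = e / p)
    (ζ : ℂ) (hζ : IsPrimitiveRoot ζ e)
    (m : ZMod e → ℕ) (hmn : ∀ k, n ≤ m k) (hm : ∀ k, m (k + (d : ZMod e)) = m k)
    (xv : BIdx e m → ℂ) (hxv : ∀ bb, xv bb ≠ 0)
    (β : ZMod e → Multiset ℕ) (hβ : IsEPartition e n β)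
    (j : ℕ) (hj : j < p) (hcj : csize e d β ∣ j)
    (v : TIdx e n m → ℂ) (hv0 : v ≠ 0)
    (hhw : v ∈ hwSubmodule e n m β)
    (hτ : Matrix.mulVecLin ((tauMat e n d m hm) ^ (csize e d β)) v = v)
    (S : Submodule ℂ (TIdx e n m → ℂ))
    (hS : S = Submodule.span ℂ
      {u | ∃ g, IsBlockDiag e m g ∧ IsUnit g ∧
        u = Matrix.mulVecLin (tensorPow e n m g) v}) :
    traceOn S (Matrix.mulVecLin (Dmat e n m xv * (tauMat e n d m hm) ^ j)) =
      schurBrace e p d m xv j β := by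
  subst hS
  have hSys := mkSys (p := p) hp hd hm hcj hv0 hhw hτ
  have hD : Dmat e n m xv = tp n (Matrix.diagonal xv) := by
    rw [tp_diag_any]; rfl
  rw [hD, tauMat_pow]
  have hfin := hSys.final (x := xv)
  refine Eq.trans (Eq.trans ?_ hfin) ?_
  · rfl
  · rw [schurBrace, sAlphaSys, Finset.prod_range]
    refine Finset.prod_congr rfl fun k _ => ?_
    rw [schurFin_eq, braceF, if_pos k.2]
    have hX : ∀ l : Fin (m ((k.val : ℕ) : ZMod e)),
        (∏ s ∈ Finset.range (hOrd p j),
          xv (((tauP hm ^ j) ^ s) (iotaJ e m (Esys p d j) ⟨k, l⟩))) =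
        vvX e p d m xv j k.val l.val := by
      intro l
      rw [vvX, Xvar]
      refine Finset.prod_congr rfl fun s _ => ?_
      have hms : m ((k.val + s * j * d : ℕ) : ZMod e) = m ((k.val : ℕ) : ZMod e) := by
        rw [← m_shift hm (s * j) ((k.val : ℕ) : ZMod e)]
        push_cast; rfl
      rw [xval, dif_pos (lt_of_lt_of_eq l.2 hms.symm)]
      congr 1
      refine bidx_ext ?_ ?_
      · rw [(tauP_pow_pow hm j s _).1]
        change ((k.val : ℕ) : ZMod e) + _ = _
        push_cast; rfl
      · rw [(tauP_pow_pow hm j s _).2]; rfl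
    simp only [hX]
    rfl

end GreenII
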